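/- arXiv:2402.17849 — 7 statements merged into one kernel-verified Lean document; each statement's English description precedes it below -/
import Mathlib

section
/- For every integer n ≥ 1, the number of 3-compositions of n equals the number of ordered pairs of compositions of n, and both are equal to 4^(n−1). -/
/-!
A colored composition of `n + 1` arises from exactly one colored composition of `n`, either by
putting a new first part `1` of any color in front of it, or by enlarging its first part by `1`:
which of the two happened is read off from whether the first part is `1`. With `k` colors this
gives `k + 1` choices at each step, starting from the single colored composition of `1`. Hence
there are `(k + 1) ^ (n - 1)` of them, which for `k + 1 = 2 ^ r` is the number of `r`-tuples of
compositions of `n`.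
-/

section ColoredComposition

variable {κ : Type*} {c₀ : κ} {n : ℕ}

/-- `IsColoredComposition c₀ n l` says that `l`, a list of (part, color) pairs, is a composition
of `n` with parts colored by `κ` and last part of color `c₀`. For `κ` with `k` elements these are
Andrews' `k`-compositions of `n`. The empty list has no last part, so it is excluded. -/
def IsColoredComposition (c₀ : κ) (n : ℕ) (l : List (ℕ × κ)) : Prop :=
  (∀ p ∈ l, 0 < p.1) ∧ (l.map Prod.fst).sum = n ∧ (l.map Prod.snd).getLast? = some c₀

/-- Increases by one the number composed by a list of colored parts: `some c` puts a new part `1`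
of color `c` in front, `none` enlarges the first part (and does nothing to the empty list). -/
def growFront : Option κ → List (ℕ × κ) → List (ℕ × κ)
  | some c, l => (1, c) :: l
  | none, [] => []
  | none, (a, c) :: t => (a + 1, c) :: t

theorem IsColoredComposition.exists_eq_cons {l : List (ℕ × κ)}
    (hl : IsColoredComposition c₀ n l) : ∃ a c t, l = (a + 1, c) :: t := by
  obtain ⟨hpos, -, hlast⟩ := hl
  match l with
  | [] => simp at hlast
  | (0, c) :: t => simp at hpos
  | (a + 1, c) :: t => exact ⟨a, c, t, rfl⟩

theorem isColoredComposition_one_iff {l : List (ℕ × κ)} :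
    IsColoredComposition c₀ 1 l ↔ l = [(1, c₀)] := by
  refine ⟨fun hl ↦ ?_, by rintro rfl; simp [IsColoredComposition]⟩
  obtain ⟨a, c, t, rfl⟩ := hl.exists_eq_cons
  obtain ⟨hpos, hsum, hlast⟩ := hl
  cases t with
  | nil => simp_all
  | cons q t =>
    have hq : 0 < q.1 := hpos q (by simp)
    simp only [List.map_cons, List.sum_cons] at hsum
    omega

theorem isColoredComposition_one_cons_iff (hn : n ≠ 0) {c : κ} {t : List (ℕ × κ)} :
    IsColoredComposition c₀ (n + 1) ((1, c) :: t) ↔ IsColoredComposition c₀ n t := by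
  cases t with
  | nil => simp [IsColoredComposition, hn]
  | cons q t => simp [IsColoredComposition, add_comm 1]

theorem isColoredComposition_add_two_cons_iff {a : ℕ} {c : κ} {t : List (ℕ × κ)} :
    IsColoredComposition c₀ (n + 1) ((a + 2, c) :: t) ↔
      IsColoredComposition c₀ n ((a + 1, c) :: t) := by
  have hsum (s : ℕ) : a + 2 + s = n + 1 ↔ a + 1 + s = n := by omega
  simp [IsColoredComposition, List.getLast?_cons, hsum]

theorem bijOn_growFront (c₀ : κ) (hn : n ≠ 0) :
    Set.BijOn (fun x : Option κ × List (ℕ × κ) ↦ growFront x.1 x.2)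
      (Set.univ ×ˢ {l | IsColoredComposition c₀ n l})
      {l | IsColoredComposition c₀ (n + 1) l} := by
  refine ⟨?mapsTo, ?injOn, ?surjOn⟩
  case mapsTo =>
    rintro ⟨_ | c, l⟩ ⟨-, hl⟩
    · obtain ⟨a, c, t, rfl⟩ := hl.exists_eq_cons
      exact isColoredComposition_add_two_cons_iff.2 hl
    · exact (isColoredComposition_one_cons_iff hn).2 hl
  case injOn =>
    rintro ⟨o, l⟩ ⟨-, hl⟩ ⟨o', l'⟩ ⟨-, hl'⟩ h
    obtain ⟨a, c, t, rfl⟩ := hl.exists_eq_cons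
    obtain ⟨a', c', t', rfl⟩ := hl'.exists_eq_cons
    cases o <;> cases o' <;> simp_all [growFront]
  case surjOn =>
    intro l hl
    obtain ⟨_ | a, c, t, rfl⟩ := IsColoredComposition.exists_eq_cons hl
    · exact ⟨(some c, t), ⟨trivial, (isColoredComposition_one_cons_iff hn).1 hl⟩, rfl⟩
    · exact ⟨(none, (a + 1, c) :: t), ⟨trivial, isColoredComposition_add_two_cons_iff.1 hl⟩, rfl⟩

theorem ncard_isColoredComposition (c₀ : κ) (hn : 1 ≤ n) :
    {l | IsColoredComposition c₀ n l}.ncard = Nat.card (Option κ) ^ (n - 1) := by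
  induction n, hn using Nat.le_induction with
  | base => simp [isColoredComposition_one_iff]
  | succ n hn ih =>
    have hn₀ : n ≠ 0 := Nat.one_le_iff_ne_zero.1 hn
    calc {l | IsColoredComposition c₀ (n + 1) l}.ncard
      _ = (Set.univ ×ˢ {l | IsColoredComposition c₀ n l} : Set (Option κ × _)).ncard :=
        (Nat.card_congr (bijOn_growFront c₀ hn₀).equiv).symm
      _ = Nat.card (Option κ) * Nat.card (Option κ) ^ (n - 1) := by
        rw [Set.ncard_prod, Set.ncard_univ, ih]
      _ = Nat.card (Option κ) ^ (n + 1 - 1) := by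
        rw [mul_pow_sub_one hn₀, Nat.add_sub_cancel]

end ColoredComposition

theorem card_fin_arrow_composition (r n : ℕ) :
    Nat.card (Fin r → Composition n) = (2 ^ r) ^ (n - 1) := by
  rw [Nat.card_fun, Nat.card_fin, Nat.card_eq_fintype_card, composition_card, pow_right_comm]

theorem stmt_0_general {κ : Type*} [Finite κ] (c₀ : κ) {r : ℕ} (hκ : Nat.card κ + 1 = 2 ^ r)
    (n : ℕ) (hn : 1 ≤ n) :
    Nat.card {l : List (ℕ × κ) // IsColoredComposition c₀ n l} =
      Nat.card (Fin r → Composition n) ∧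
    Nat.card (Fin r → Composition n) = (2 ^ r) ^ (n - 1) := by
  have hcard := ncard_isColoredComposition c₀ hn
  rw [Finite.card_option, hκ] at hcard
  exact ⟨hcard.trans (card_fin_arrow_composition r n).symm, card_fin_arrow_composition r n⟩

/-- For every integer `n ≥ 1`, the number of 3-compositions of `n`
(compositions with parts colored by one of three colors, the last part having
the first color) equals the number of ordered pairs of compositions of `n`,
and both are equal to `4^(n-1)`.

A 3-composition is encoded as a list of pairs `(a, c)` with `a` a positive part
and `c : Fin 3` its color; the color of the last part must be `0` (color 1). -/
theorem stmt_0 (n : ℕ) (hn : 1 ≤ n) :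
    Nat.card {l : List (ℕ × Fin 3) // (∀ p ∈ l, 0 < p.1) ∧
        (l.map Prod.fst).sum = n ∧ (l.map Prod.snd).getLast? = some 0} =
      Nat.card (Composition n × Composition n) ∧
    Nat.card (Composition n × Composition n) = 4 ^ (n - 1) := by
  rw [← Nat.card_congr (finTwoArrowEquiv (Composition n))]
  exact stmt_0_general (0 : Fin 3) (r := 2) (by simp) n hn
end

section
/- For all integers k ≥ 1 and n ≥ 1, the number of k-compositions of n equals the number of g-compositions of n with g = k+1. -/
/-!
Replace each part `a` of color `c` by the entry `a` followed by `c - 1` zeros. A list of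
non-negative integers with positive first entry splits uniquely into positive entries, each
followed by a run of zeros, so this is a bijection. At most `k` colors means that no run of zeros is
longer than `k - 1`, and the last part has color `1` exactly when the last entry is positive.
-/

section

open List

variable {α : Type*} {z : α}

theorem replicate_prefix_replicate_append_iff {u : List α} (hu : u.head? ≠ some z) (k c : ℕ) :
    replicate k z <+: replicate c z ++ u ↔ k ≤ c := by
  induction c generalizing k with
  | zero =>
    cases k with
    | zero => simp
    | succ k => cases u <;> simp_all [replicate_succ, eq_comm (a := z)]
  | succ c ih => cases k <;> simp [replicate_succ, ih]

theorem replicate_append_eq_replicate_append_iff {u v : List α} (hu : u.head? ≠ some z)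
    (hv : v.head? ≠ some z) {c d : ℕ} :
    replicate c z ++ u = replicate d z ++ v ↔ c = d ∧ u = v := by
  refine ⟨fun h => ?_, by rintro ⟨rfl, rfl⟩; rfl⟩
  have hcd : c ≤ d := (replicate_prefix_replicate_append_iff hv c d).1 (h ▸ prefix_append _ _)
  have hdc : d ≤ c := (replicate_prefix_replicate_append_iff hu d c).1 (h ▸ prefix_append _ _)
  obtain rfl := hcd.antisymm hdc
  exact ⟨rfl, append_cancel_left h⟩

theorem replicate_infix_cons_iff {a : α} (ha : a ≠ z) (k : ℕ) (u : List α) :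
    replicate k z <:+: a :: u ↔ replicate k z <:+: u := by
  cases k <;> simp [infix_cons_iff, replicate_succ, ha.symm]

theorem replicate_infix_replicate_append_iff {u : List α} (hu : u.head? ≠ some z) (k c : ℕ) :
    replicate k z <:+: replicate c z ++ u ↔ k ≤ c ∨ replicate k z <:+: u := by
  induction c with
  | zero => cases k <;> simp
  | succ c ih =>
    have hprefix := replicate_prefix_replicate_append_iff hu k (c + 1)
    rw [replicate_succ, cons_append] at hprefix ⊢
    rw [infix_cons_iff, hprefix, ih, ← or_assoc]
    exact or_congr_left (by lia)

/-- The list in which each pair `(a, c)` is expanded to the entry `a` followed by a run of `c`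
copies of `z`. For `z = 0` it turns a colored composition, with colors counted from `0`, into a list
of non-negative integers. -/
def expandRuns (z : α) (l : List (α × ℕ)) : List α :=
  l.flatMap fun p => p.1 :: replicate p.2 z

@[simp]
theorem expandRuns_nil : expandRuns z [] = [] := rfl

@[simp]
theorem expandRuns_cons (p : α × ℕ) (l : List (α × ℕ)) :
    expandRuns z (p :: l) = p.1 :: (replicate p.2 z ++ expandRuns z l) := by
  simp [expandRuns]

theorem expandRuns_concat (l : List (α × ℕ)) (p : α × ℕ) :
    expandRuns z (l ++ [p]) = expandRuns z l ++ p.1 :: replicate p.2 z := by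
  simp [expandRuns]

theorem head?_expandRuns_ne {l : List (α × ℕ)} (hl : ∀ p ∈ l, p.1 ≠ z) :
    (expandRuns z l).head? ≠ some z := by
  cases l <;> simp_all

theorem exists_head?_expandRuns_ne_iff {l : List (α × ℕ)} (hl : ∀ p ∈ l, p.1 ≠ z) :
    (∃ a, (expandRuns z l).head? = some a ∧ a ≠ z) ↔ l ≠ [] := by
  cases l <;> simp_all

theorem sum_expandRuns {M : Type*} [AddMonoid M] (l : List (M × ℕ)) :
    (expandRuns 0 l).sum = (l.map Prod.fst).sum := by
  induction l with
  | nil => rfl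
  | cons p l ih => simp [ih]

theorem exists_getLast?_expandRuns_ne_iff {l : List (α × ℕ)} (hl : ∀ p ∈ l, p.1 ≠ z) :
    (∃ a, (expandRuns z l).getLast? = some a ∧ a ≠ z) ↔ ∃ p, l.getLast? = some p ∧ p.2 = 0 := by
  rcases eq_nil_or_concat l with rfl | ⟨l, ⟨a, c⟩, rfl⟩
  · simp
  · have ha : a ≠ z := hl (a, c) (by simp)
    cases c <;> simp [expandRuns_concat, replicate_succ', getLast?_cons, ha]

theorem replicate_infix_expandRuns_iff {l : List (α × ℕ)} (hl : ∀ p ∈ l, p.1 ≠ z)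
    {k : ℕ} (hk : 0 < k) :
    replicate k z <:+: expandRuns z l ↔ ∃ p ∈ l, k ≤ p.2 := by
  induction l with
  | nil => simp [hk.ne']
  | cons p l ih =>
    obtain ⟨hp, hl⟩ := forall_mem_cons.1 hl
    rw [expandRuns_cons, replicate_infix_cons_iff hp,
      replicate_infix_replicate_append_iff (head?_expandRuns_ne hl), ih hl, exists_mem_cons_iff]

theorem injOn_expandRuns : Set.InjOn (expandRuns z) {l | ∀ p ∈ l, p.1 ≠ z} := by
  intro l hl l' hl' h
  induction l generalizing l' with
  | nil => cases l' <;> simp_all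
  | cons p l ih =>
    cases l' with
    | nil => simp at h
    | cons q l' =>
      have hl := (forall_mem_cons.1 hl).2
      have hl' := (forall_mem_cons.1 hl').2
      rw [expandRuns_cons, expandRuns_cons, cons_eq_cons,
        replicate_append_eq_replicate_append_iff (head?_expandRuns_ne hl)
          (head?_expandRuns_ne hl')] at h
      obtain ⟨hfst, hsnd, htail⟩ := h
      rw [Prod.ext hfst hsnd, ih hl hl' htail]

theorem exists_eq_replicate_append_expandRuns (z : α) (m : List α) :
    ∃ (c : ℕ) (l : List (α × ℕ)), (∀ p ∈ l, p.1 ≠ z) ∧ m = replicate c z ++ expandRuns z l := by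
  induction m with
  | nil => exact ⟨0, [], by simp, rfl⟩
  | cons a m ih =>
    obtain ⟨c, l, hl, rfl⟩ := ih
    by_cases ha : a = z
    · exact ⟨c + 1, l, hl, by simp [ha, replicate_succ]⟩
    · exact ⟨0, (a, c) :: l, forall_mem_cons.2 ⟨ha, hl⟩, by simp⟩

theorem bijOn_expandRuns :
    Set.BijOn (expandRuns z) {l | ∀ p ∈ l, p.1 ≠ z} {m | m.head? ≠ some z} := by
  refine ⟨fun l hl => head?_expandRuns_ne hl, injOn_expandRuns, fun m hm => ?_⟩
  obtain ⟨c, l, hl, rfl⟩ := exists_eq_replicate_append_expandRuns z m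
  cases c with
  | zero => exact ⟨l, hl, rfl⟩
  | succ c => simp [replicate_succ] at hm

theorem bijOn_expandRuns_map_val {k : ℕ} (hk : 0 < k) :
    Set.BijOn (fun l : List (α × Fin k) => expandRuns z (l.map (Prod.map id Fin.val)))
      {l | ∀ p ∈ l, p.1 ≠ z} {m | m.head? ≠ some z ∧ ¬ replicate k z <:+: m} := by
  have hmap {l : List (α × Fin k)} (hl : ∀ p ∈ l, p.1 ≠ z) :
      ∀ p ∈ l.map (Prod.map id Fin.val), p.1 ≠ z := forall_mem_map.2 hl
  refine ⟨fun l hl => ⟨head?_expandRuns_ne (hmap hl), ?_⟩, fun l hl l' hl' h => ?_, ?_⟩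
  · simp [replicate_infix_expandRuns_iff (hmap hl) hk]
  · exact (Function.injective_id.prodMap Fin.val_injective).list_map
      (injOn_expandRuns (hmap hl) (hmap hl') h)
  · rintro m ⟨hhead, hruns⟩
    obtain ⟨l, hl, rfl⟩ := bijOn_expandRuns.surjOn hhead
    have hlt : ∀ p ∈ l, p.2 < k := by simpa [replicate_infix_expandRuns_iff hl hk] using hruns
    obtain ⟨l, rfl⟩ : l ∈ Set.range (List.map (Prod.map id Fin.val : α × Fin k → α × ℕ)) := by
      rw [Set.range_list_map]
      exact fun p hp => ⟨(p.1, ⟨p.2, hlt p hp⟩), rfl⟩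
    exact ⟨l, fun p hp => hl _ (mem_map_of_mem hp), rfl⟩

theorem stmt_1_general {M : Type*} [AddMonoid M] {k : ℕ} (hk : 0 < k) (n : M) :
    Set.BijOn (fun l : List (M × Fin k) => expandRuns 0 (l.map (Prod.map id Fin.val)))
      {l | (∀ p ∈ l, p.1 ≠ 0) ∧ (l.map Prod.fst).sum = n ∧
        ∃ p, l.getLast? = some p ∧ (p.2 : ℕ) = 0}
      {m | m.sum = n ∧ (∃ a, m.head? = some a ∧ a ≠ 0) ∧
        (∃ a, m.getLast? = some a ∧ a ≠ 0) ∧ ¬ replicate k 0 <:+: m} := by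
  convert (bijOn_expandRuns_map_val (z := (0 : M)) hk).subset_right ?_ using 1
  · ext l
    refine and_congr_right fun hl => ?_
    have hl' : ∀ p ∈ l.map (Prod.map id Fin.val), p.1 ≠ 0 := forall_mem_map.2 hl
    have hruns := ((bijOn_expandRuns_map_val hk).mapsTo hl).2
    have hne : (∃ p, (l.map (Prod.map id Fin.val)).getLast? = some p ∧ p.2 = 0) →
        l.map (Prod.map id Fin.val) ≠ [] := by
      rintro ⟨p, hp, -⟩ h
      simp [h] at hp
    simp only [Set.mem_preimage, Set.mem_ofPred_eq, sum_expandRuns,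
      exists_head?_expandRuns_ne_iff hl', exists_getLast?_expandRuns_ne_iff hl', hruns,
      not_false_eq_true, and_true, and_iff_right_of_imp hne]
    simp [Prod.map_fst']
  · rintro m ⟨-, ⟨a, hhead, ha⟩, -, hruns⟩
    exact ⟨by simpa [hhead] using ha, hruns⟩

end

/-- For all integers `k ≥ 1` and `n ≥ 1`, the number of
`k`-compositions of `n` equals the number of `g`-compositions of `n` with
`g = k + 1`.

A `k`-composition is encoded as a list of pairs `(a, c)` with `a` a positive
part and `c : Fin k` its color; the last part must have color `0` (color 1).
A `g`-composition is a list of non-negative integers summing to `n`, whose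
first and last entries are positive, and containing no run of `g - 1 = k`
consecutive zeros (so every maximal run of zeros has length at most `g - 2`). -/
theorem stmt_1 (k n : ℕ) (hk : 1 ≤ k) (hn : 1 ≤ n) :
    Nat.card {l : List (ℕ × Fin k) // (∀ p ∈ l, 0 < p.1) ∧
        (l.map Prod.fst).sum = n ∧
        (∃ p, l.getLast? = some p ∧ (p.2 : ℕ) = 0)} =
    Nat.card {l : List ℕ // l.sum = n ∧
        (∃ a, l.head? = some a ∧ 0 < a) ∧
        (∃ a, l.getLast? = some a ∧ 0 < a) ∧
        ¬ (List.replicate k 0 <:+: l)} := by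
  simp only [Nat.pos_iff_ne_zero]
  exact Nat.card_congr ((stmt_1_general hk n).equiv _)
end

section
/- For all integers n ≥ 1 and h ≥ 1, the number of pairs (P,i), where P is a Dyck path of length 2n and i is a peak of P of height h, equals the number of Dyck bridges of length 2n whose first step is a down step and which cross the x-axis exactly h−1 times. -/
/-- The step associated to a letter: `true` is an up step `+1`, `false` a down step `-1`. -/
def stepVal (b : Bool) : ℤ := if b then 1 else -1

/-- Partial sum `S_i`: the sum of the first `i` steps of the word `w`. -/
def psum {L : ℕ} (w : Fin L → Bool) (i : ℕ) : ℤ :=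
  ∑ j : Fin L, if (j : ℕ) < i then stepVal (w j) else 0

/-- A Dyck bridge: a `±1` word whose total sum is `0`. -/
def IsBridge {L : ℕ} (w : Fin L → Bool) : Prop := psum w L = 0

/-- A Dyck path: a bridge all of whose partial sums are nonnegative. -/
def IsDyck {L : ℕ} (w : Fin L → Bool) : Prop :=
  IsBridge w ∧ ∀ i : ℕ, 0 ≤ psum w i

/-- A peak at (0-based) position `i`: step `i` is up and step `i+1` is down. -/
def IsPeak {L : ℕ} (w : Fin L → Bool) (i : ℕ) : Prop :=
  ∃ j k : Fin L, (j : ℕ) = i ∧ (k : ℕ) = i + 1 ∧ w j = true ∧ w k = false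

/-- The height of the peak at (0-based) position `i`, i.e. the altitude
reached by its up step. -/
def peakHeight {L : ℕ} (w : Fin L → Bool) (i : ℕ) : ℤ := psum w (i + 1)

/-- A crossing of the x-axis at (1-based) index `i`: `0 < i < L`, `S_i = 0`,
and the steps `w_i`, `w_{i+1}` (1-based) are equal. -/
def IsCrossing {L : ℕ} (w : Fin L → Bool) (i : ℕ) : Prop :=
  0 < i ∧ i < L ∧ psum w i = 0 ∧
    ∃ j k : Fin L, (j : ℕ) + 1 = i ∧ (k : ℕ) = i ∧ w j = w k

open Finset

/-! Let `W m k` be the number of `±1` words of length `m` leading from height `k` to the axis.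
Removing the first step of a word shows, by induction on `m`, that among these words
* `W m (|k| + 2 c)` have at least `c` crossings: a first step across the axis trades one crossing
  for two units of height;
* `W m k - W m (k + 2)` never go below the axis, if `k ≥ 0`.

It also shows that the words of length `m + 1` leading from `k ≥ 0` to the axis without going below
it, with a marked peak of height `h`, number `W m (|k + 1 - h| + h) - W m (k + 2 h + 1)`: the kink
of the absolute value at `k + 1 = h` accounts for the peak formed by the first two steps.
For `k = 0`, and for bridges after their initial down step, this gives
`W m (2 h - 1) - W m (2 h + 1)` with `m = 2 n - 1` on both sides of the theorem. -/

section Words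

variable {m : ℕ}

theorem psum_zero (w : Fin m → Bool) : psum w 0 = 0 := by
  simp [psum]

theorem psum_cons_succ (b : Bool) (w : Fin m → Bool) (i : ℕ) :
    psum (Fin.cons b w : Fin (m + 1) → Bool) (i + 1) = stepVal b + psum w i := by
  simp [psum, Fin.sum_univ_succ]

theorem sum_word_succ {M : Type*} [AddCommMonoid M] (f : (Fin (m + 1) → Bool) → M) :
    ∑ w, f w = ∑ w : Fin m → Bool, f (Fin.cons true w) +
      ∑ w : Fin m → Bool, f (Fin.cons false w) := by
  rw [← (Fin.consEquiv fun _ : Fin (m + 1) ↦ Bool).sum_comp, Fintype.sum_prod_type,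
    Fintype.sum_bool]
  rfl

theorem card_word_succ (p : (Fin (m + 1) → Bool) → Prop) [DecidablePred p] :
    #{w | p w} = #{w : Fin m → Bool | p (Fin.cons true w)} +
      #{w : Fin m → Bool | p (Fin.cons false w)} := by
  simp only [card_filter, sum_word_succ]

end Words

section Vertices

variable {m : ℕ} (r : Bool → Bool → Prop)

/-- The word `w` has a vertex of type `r` after its (0-based) step `i`: the steps `i` and `i + 1`
are related by `r`. Peaks are the vertices of type `IsUpDown`, crossings those of type `Eq` at
height `0`. -/
def IsVertex (w : Fin m → Bool) (i : ℕ) : Prop :=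
  ∃ j k : Fin m, (j : ℕ) = i ∧ (k : ℕ) = i + 1 ∧ r (w j) (w k)

instance [DecidableRel r] (w : Fin m → Bool) : DecidablePred (IsVertex r w) := fun i ↦
  inferInstanceAs (Decidable (∃ j k : Fin m, (j : ℕ) = i ∧ (k : ℕ) = i + 1 ∧ r (w j) (w k)))

/-- The type of the vertices that are peaks. -/
abbrev IsUpDown (a b : Bool) : Prop := a = true ∧ b = false

variable {r}

theorem IsVertex.lt {w : Fin m → Bool} {i : ℕ} (hi : IsVertex r w i) : i < m := by
  obtain ⟨j, -, rfl, -⟩ := hi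
  exact j.isLt

theorem isVertex_cons_zero {b : Bool} {w : Fin (m + 1) → Bool} :
    IsVertex r (Fin.cons b w : Fin (m + 2) → Bool) 0 ↔ r b (w 0) := by
  simp [IsVertex, Fin.exists_fin_succ]

theorem isVertex_cons_succ {b : Bool} {w : Fin m → Bool} {i : ℕ} :
    IsVertex r (Fin.cons b w : Fin (m + 1) → Bool) (i + 1) ↔ IsVertex r w i := by
  simp [IsVertex, Fin.exists_fin_succ]

variable (r) [DecidableRel r]

/-- The number of vertices of type `r` at height `h` of the word `w` started at height `k`. -/
def vertexCount (k h : ℤ) (w : Fin m → Bool) : ℕ :=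
  Nat.count (fun i ↦ IsVertex r w i ∧ k + psum w (i + 1) = h) m

theorem vertexCount_cons (k h : ℤ) (b : Bool) (w : Fin (m + 1) → Bool) :
    vertexCount r k h (Fin.cons b w : Fin (m + 2) → Bool) =
      vertexCount r (k + stepVal b) h w + if r b (w 0) ∧ k + stepVal b = h then 1 else 0 := by
  rw [vertexCount, Nat.count_succ']
  simp only [vertexCount, isVertex_cons_succ, isVertex_cons_zero, psum_cons_succ b w, psum_zero,
    add_zero, add_assoc k]

theorem vertexCount_of_length_one (k h : ℤ) (w : Fin 1 → Bool) : vertexCount r k h w = 0 := by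
  simp [vertexCount, IsVertex, Nat.count_succ]

end Vertices

section Walks

/-- The number of `±1` words of length `m` leading from height `k` to height `0`. -/
def walkCount (m : ℕ) (k : ℤ) : ℕ :=
  #{w : Fin m → Bool | k + psum w m = 0}

theorem walkCount_zero (k : ℤ) : walkCount 0 k = if k = 0 then 1 else 0 := by
  simp [walkCount, psum_zero, apply_ite card]

theorem walkCount_succ (m : ℕ) (k : ℤ) :
    walkCount (m + 1) k = walkCount m (k + 1) + walkCount m (k - 1) := by
  simp [walkCount, card_word_succ, psum_cons_succ, stepVal, ← add_assoc, sub_eq_add_neg]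

theorem walkCount_neg (m : ℕ) (k : ℤ) : walkCount m (-k) = walkCount m k := by
  induction m generalizing k with
  | zero => simp [walkCount_zero]
  | succ m ih =>
    rw [walkCount_succ, walkCount_succ, ← ih (k + 1), ← ih (k - 1), neg_add', neg_sub', add_comm,
      sub_neg_eq_add]

end Walks

section Crossings

/-- The number of crossings of the axis by `w` started at height `k`, when it is preceded by a
step `b`, so that a crossing may already occur at the start of `w`. -/
def crossingCount {m : ℕ} (k : ℤ) (b : Bool) (w : Fin m → Bool) : ℕ :=
  vertexCount Eq (k - stepVal b) 0 (Fin.cons b w : Fin (m + 1) → Bool)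

theorem crossingCount_cons {m : ℕ} (k : ℤ) (b b' : Bool) (w : Fin m → Bool) :
    crossingCount k b (Fin.cons b' w : Fin (m + 1) → Bool) =
      crossingCount (k + stepVal b') b' w + if b = b' ∧ k = 0 then 1 else 0 := by
  rw [crossingCount, vertexCount_cons, crossingCount, sub_add_cancel, add_sub_cancel_right,
    Fin.cons_zero]

theorem card_le_crossingCount_eq_walkCount (m : ℕ) (k : ℤ) (b : Bool) (c : ℕ) :
    #{w : Fin m → Bool | k + psum w m = 0 ∧ c ≤ crossingCount k b w} =
      walkCount m (|k| + 2 * c) := by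
  induction m generalizing k b c with
  | zero =>
    have height_eq : k = 0 ∧ c = 0 ↔ |k| + 2 * c = 0 := by grind
    simp [walkCount_zero, psum_zero, crossingCount, vertexCount_of_length_one, height_eq,
      apply_ite card]
  | succ m ih =>
    have remove_first_step :
        #{w : Fin (m + 1) → Bool | k + psum w (m + 1) = 0 ∧ c ≤ crossingCount k b w} =
          walkCount m (|k + 1| + 2 * ↑(c - if b = true ∧ k = 0 then 1 else 0)) +
            walkCount m (|k - 1| + 2 * ↑(c - if b = false ∧ k = 0 then 1 else 0)) := by
      simp only [card_word_succ, psum_cons_succ, ← add_assoc, crossingCount_cons,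
        ← tsub_le_iff_right, ih, stepVal]
      rfl
    rw [remove_first_step, walkCount_succ]
    rcases lt_trichotomy k 0 with hk | rfl | hk
    · grind
    · have reflect : walkCount m (-1) = walkCount m 1 := walkCount_neg m 1
      rw [zero_add, zero_sub, abs_neg, abs_one, abs_zero]
      cases b <;> cases c <;> grind
    · grind

theorem card_crossingCount_eq_add_walkCount (m : ℕ) (k : ℤ) (b : Bool) (c : ℕ) :
    #{w : Fin m → Bool | k + psum w m = 0 ∧ crossingCount k b w = c} +
      walkCount m (|k| + 2 * (c + 1)) = walkCount m (|k| + 2 * c) := by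
  have card_succ_le := card_le_crossingCount_eq_walkCount m k b (c + 1)
  rw [Nat.cast_succ] at card_succ_le
  rw [← card_succ_le, ← card_le_crossingCount_eq_walkCount m k b c,
    ← card_union_of_disjoint, ← filter_or]
  · congr! 2 with w
    grind
  · exact disjoint_filter.2 (by grind)

end Crossings

section Dyck

/-- The word `w` started at height `k` ends on the axis and never goes below it. -/
def IsDyckFrom {m : ℕ} (k : ℤ) (w : Fin m → Bool) : Prop :=
  k + psum w m = 0 ∧ ∀ i, 0 ≤ k + psum w i

noncomputable instance {m : ℕ} (k : ℤ) : DecidablePred (IsDyckFrom (m := m) k) :=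
  Classical.decPred _

theorem isDyckFrom_zero {m : ℕ} {w : Fin m → Bool} : IsDyckFrom 0 w ↔ IsDyck w := by
  simp [IsDyckFrom, IsDyck, IsBridge]

theorem IsDyckFrom.nonneg {m : ℕ} {k : ℤ} {w : Fin m → Bool} (hw : IsDyckFrom k w) : 0 ≤ k := by
  simpa [psum_zero] using hw.2 0

theorem isDyckFrom_cons {m : ℕ} {k : ℤ} {b : Bool} {w : Fin m → Bool} :
    IsDyckFrom k (Fin.cons b w : Fin (m + 1) → Bool) ↔ 0 ≤ k ∧ IsDyckFrom (k + stepVal b) w := by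
  simp only [IsDyckFrom, ← Nat.and_forall_add_one (p := fun i ↦ 0 ≤ k + psum (Fin.cons b w) i),
    psum_cons_succ, psum_zero, add_zero, add_assoc]
  tauto

/-- The number of words of length `m` leading from height `k` to the axis without going below
it. -/
noncomputable def dyckCount (m : ℕ) (k : ℤ) : ℕ :=
  #{w : Fin m → Bool | IsDyckFrom k w}

theorem dyckCount_of_neg (m : ℕ) {k : ℤ} (hk : k < 0) : dyckCount m k = 0 :=
  card_filter_eq_zero_iff.2 fun _ _ hw ↦ hk.not_ge hw.nonneg

theorem dyckCount_zero (k : ℤ) : dyckCount 0 k = if k = 0 then 1 else 0 := by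
  have isDyckFrom_iff (w : Fin 0 → Bool) : IsDyckFrom k w ↔ k = 0 := by
    simp +contextual [IsDyckFrom, psum]
  simp [dyckCount, isDyckFrom_iff, apply_ite card]

theorem dyckCount_succ (m : ℕ) {k : ℤ} (hk : 0 ≤ k) :
    dyckCount (m + 1) k = dyckCount m (k + 1) + dyckCount m (k - 1) := by
  simp [dyckCount, card_word_succ, isDyckFrom_cons, hk, stepVal, sub_eq_add_neg]

theorem dyckCount_add_walkCount (m : ℕ) {k : ℤ} (hk : -1 ≤ k) :
    dyckCount m k + walkCount m (k + 2) = walkCount m k := by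
  induction m generalizing k with
  | zero =>
    rw [dyckCount_zero, walkCount_zero, walkCount_zero]
    grind
  | succ m ih =>
    obtain rfl | hk := hk.eq_or_lt
    · rw [dyckCount_of_neg _ (by norm_num), zero_add]
      exact (walkCount_neg _ 1).symm
    have up := @ih (k + 1) (by lia)
    have down := @ih (k - 1) (by lia)
    rw [dyckCount_succ m (by lia), walkCount_succ, walkCount_succ m k]
    grind

end Dyck

section MarkedPeaks

/-- The number of pairs of a word counted by `dyckCount m k` and a peak of it of height `h`. -/
noncomputable def markedPeakCount (m : ℕ) (k h : ℤ) : ℕ :=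
  ∑ w : Fin m → Bool with IsDyckFrom k w, vertexCount IsUpDown k h w

theorem markedPeakCount_of_neg (m : ℕ) {k : ℤ} (h : ℤ) (hk : k < 0) :
    markedPeakCount m k h = 0 := by
  rw [markedPeakCount, filter_false_of_mem fun _ _ hw ↦ hk.not_ge hw.nonneg, sum_empty]

theorem markedPeakCount_one (k h : ℤ) : markedPeakCount 1 k h = 0 :=
  sum_eq_zero fun w _ ↦ vertexCount_of_length_one IsUpDown k h w

theorem card_isDyckFrom_down_first (m : ℕ) {k : ℤ} (hk : 0 ≤ k) :
    #{w : Fin (m + 1) → Bool | IsDyckFrom k w ∧ w 0 = false} = dyckCount m (k - 1) := by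
  simp [dyckCount, card_word_succ, isDyckFrom_cons, hk, stepVal, sub_eq_add_neg]

theorem markedPeakCount_succ (m : ℕ) {k : ℤ} (h : ℤ) (hk : 0 ≤ k) :
    markedPeakCount (m + 2) k h = markedPeakCount (m + 1) (k + 1) h +
      markedPeakCount (m + 1) (k - 1) h + if k + 1 = h then dyckCount m k else 0 := by
  have initial_peaks :
      ∑ w : Fin (m + 1) → Bool with IsDyckFrom (k + 1) w,
        (if w 0 = false ∧ k + 1 = h then 1 else 0) = if k + 1 = h then dyckCount m k else 0 := by
    split_ifs with hkh
    · simp only [hkh, and_true, ← card_filter, filter_filter]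
      rw [← hkh, card_isDyckFrom_down_first m (by lia), add_sub_cancel_right]
    · simp [hkh]
  rw [← initial_peaks, markedPeakCount, sum_filter, sum_word_succ]
  simp only [isDyckFrom_cons, vertexCount_cons, hk, true_and, ← sum_filter, sum_add_distrib,
    markedPeakCount]
  simp only [stepVal, ↓reduceIte, IsUpDown, true_and, Bool.false_eq_true, false_and, filter_false,
    sum_empty, add_zero, sub_eq_add_neg]
  ring

theorem markedPeakCount_add_walkCount (m h : ℕ) {k : ℤ} (hk : -1 ≤ k) :
    markedPeakCount (m + 1) k h + walkCount m (k + 2 * h + 1) =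
      walkCount m (|k + 1 - h| + h) := by
  induction m generalizing k with
  | zero =>
    rw [markedPeakCount_one, walkCount_zero, walkCount_zero]
    grind
  | succ m ih =>
    obtain rfl | hk := hk.eq_or_lt
    · have boundary : (-1 : ℤ) + 2 * h + 1 = |-1 + 1 - (h : ℤ)| + h := by grind
      rw [markedPeakCount_of_neg _ _ (by norm_num), zero_add, boundary]
    have up := @ih (k + 1) (by lia)
    have down := @ih (k - 1) (by lia)
    have source := @dyckCount_add_walkCount m k (by lia)
    rw [markedPeakCount_succ m _ (by lia), walkCount_succ, walkCount_succ m (_ + h)]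
    rcases lt_trichotomy (k + 1) h <;> grind

end MarkedPeaks

section Translation

theorem card_subtype_eq_count {p : ℕ → Prop} [DecidablePred p] {n : ℕ} (hp : ∀ i, p i → i < n) :
    Nat.card {i // p i} = Nat.count p n := by
  rw [Nat.count_eq_card_filter_range]
  exact Nat.subtype_card _ fun i ↦ by simpa using hp i

theorem card_isPeak (L : ℕ) (h : ℤ) :
    Nat.card {p : (Fin L → Bool) × ℕ // IsDyck p.1 ∧ IsPeak p.1 p.2 ∧ peakHeight p.1 p.2 = h} =
      markedPeakCount L 0 h := by
  classical
  have card_peaks (w : Fin L → Bool) :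
      Nat.card {i // IsDyck w ∧ IsPeak w i ∧ peakHeight w i = h} =
        if IsDyckFrom 0 w then vertexCount IsUpDown 0 h w else 0 := by
    rw [card_subtype_eq_count fun i hi ↦ IsVertex.lt (r := IsUpDown) hi.2.1]
    split_ifs with hw
    · simp [vertexCount, isDyckFrom_zero.1 hw, peakHeight, IsPeak, IsVertex]
    · simp [isDyckFrom_zero.not.1 hw]
  have (w : Fin L → Bool) : Finite {i // IsDyck w ∧ IsPeak w i ∧ peakHeight w i = h} :=
    (Set.finite_Iio L).subset fun i hi ↦ IsVertex.lt (r := IsUpDown) hi.2.1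
  rw [markedPeakCount, sum_filter, Nat.card_congr (Equiv.subtypeProdEquivSigmaSubtype fun w i ↦
    IsDyck w ∧ IsPeak w i ∧ peakHeight w i = h), Nat.card_sigma]
  exact sum_congr rfl fun w _ ↦ card_peaks w

theorem card_isCrossing {L : ℕ} (w : Fin L → Bool) :
    Nat.card {i // IsCrossing w i} = vertexCount Eq 0 0 w := by
  classical
  rw [card_subtype_eq_count (n := L + 1) fun i hi ↦ hi.2.1.trans L.lt_succ_self, Nat.count_succ',
    if_neg fun hi ↦ hi.1.false, add_zero, vertexCount]
  congr! 2 with i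
  simp only [IsCrossing, IsVertex, zero_add]
  grind

theorem card_bridge_down_first (m c : ℕ) :
    Nat.card {w : Fin (m + 1) → Bool //
        IsBridge w ∧ (∃ j : Fin (m + 1), (j : ℕ) = 0 ∧ w j = false) ∧
        Nat.card {i : ℕ // IsCrossing w i} = c} =
      #{w : Fin m → Bool | -1 + psum w m = 0 ∧ crossingCount (-1) false w = c} := by
  classical
  rw [Nat.card_eq_fintype_card, Fintype.card_subtype, card_word_succ]
  simp [IsBridge, card_isCrossing, psum_cons_succ, crossingCount, stepVal]

end Translation

/-- For all integers `n ≥ 1` and `h ≥ 1`, the number of pairs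
`(P, i)`, where `P` is a Dyck path of length `2n` and `i` is a peak of `P`
of height `h`, equals the number of Dyck bridges of length `2n` whose first
step is a down step and which cross the x-axis exactly `h - 1` times. -/
theorem stmt_3 (n h : ℕ) (hn : 1 ≤ n) (hh : 1 ≤ h) :
    Nat.card {p : (Fin (2 * n) → Bool) × ℕ //
        IsDyck p.1 ∧ IsPeak p.1 p.2 ∧ peakHeight p.1 p.2 = (h : ℤ)} =
    Nat.card {w : Fin (2 * n) → Bool //
        IsBridge w ∧ (∃ j : Fin (2 * n), (j : ℕ) = 0 ∧ w j = false) ∧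
        Nat.card {i : ℕ // IsCrossing w i} = h - 1} := by
  obtain ⟨m, hm⟩ : ∃ m, 2 * n = m + 1 := ⟨2 * n - 1, by omega⟩
  obtain ⟨c, rfl⟩ : ∃ c, h = c + 1 := ⟨h - 1, by omega⟩
  rw [hm, card_isPeak, card_bridge_down_first, Nat.add_sub_cancel]
  have peaks : markedPeakCount (m + 1) 0 ↑(c + 1) + walkCount m (2 * c + 3) =
      walkCount m (2 * c + 1) := by
    grind [markedPeakCount_add_walkCount m (c + 1) (k := 0) (by norm_num)]
  have bridges : #{w : Fin m → Bool | -1 + psum w m = 0 ∧ crossingCount (-1) false w = c} +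
      walkCount m (2 * c + 3) = walkCount m (2 * c + 1) := by
    grind [card_crossingCount_eq_add_walkCount m (-1) false c]
  exact Nat.add_right_cancel (peaks.trans bridges.symm)
end

section
/- For every integer n ≥ 1, the total number of peaks in all Dyck paths of length 2n equals the binomial coefficient C(2n−1, n). -/
/-!
Deleting the up step and the down step of a peak leaves every other partial sum unchanged, and
conversely an up step followed by a down step may be inserted in a Dyck path of length `L` at each
of its `L + 1` vertices. So marked peaks in Dyck paths of length `2m + 2` are pairs of a Dyck path
of length `2m` and one of its `2m + 1` vertices, and their number is
`(2m + 1) * catalan m = choose (2m + 1) (m + 1)`.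
-/

section PeakInsertion

variable {L : ℕ}

lemma psum_insertNth_of_le (p : Fin (L + 1)) (b : Bool) (v : Fin L → Bool) {k : ℕ}
    (hk : k ≤ p) : psum (p.insertNth b v) k = psum v k := by
  have lt_iff (j : Fin L) : (p.succAbove j : ℕ) < k ↔ (j : ℕ) < k := by
    grind [Fin.succAbove, Fin.val_castSucc]
  simp [psum, Fin.sum_univ_succAbove _ p, hk.not_gt, lt_iff]

lemma psum_insertNth_succ_of_le (p : Fin (L + 1)) (b : Bool) (v : Fin L → Bool) {k : ℕ}
    (hk : p ≤ k) : psum (p.insertNth b v) (k + 1) = stepVal b + psum v k := by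
  have le_iff (j : Fin L) : (p.succAbove j : ℕ) ≤ k ↔ (j : ℕ) < k := by
    grind [Fin.succAbove, Fin.val_castSucc]
  simp [psum, Fin.sum_univ_succAbove _ p, hk, le_iff]

/-- The word obtained from `v` by inserting an up step and a down step after its first `i` letters,
so that the new word has a peak at (0-based) position `i`. -/
def insertPeak (i : Fin (L + 1)) (v : Fin L → Bool) : Fin (L + 2) → Bool :=
  i.castSucc.insertNth (α := fun _ ↦ Bool) true (i.insertNth (α := fun _ ↦ Bool) false v)

lemma insertPeak_injective (i : Fin (L + 1)) : Function.Injective (insertPeak i) :=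
  (Fin.insertNth_right_injective _).comp (Fin.insertNth_right_injective _)

lemma insertPeak_castSucc (i : Fin (L + 1)) (v : Fin L → Bool) :
    insertPeak i v i.castSucc = true :=
  Fin.insertNth_apply_same ..

lemma insertPeak_succ (i : Fin (L + 1)) (v : Fin L → Bool) : insertPeak i v i.succ = false := by
  rw [← Fin.succAbove_castSucc_self i, insertPeak, Fin.insertNth_apply_succAbove,
    Fin.insertNth_apply_same]

lemma isPeak_insertPeak (i : Fin (L + 1)) (v : Fin L → Bool) : IsPeak (insertPeak i v) i :=
  ⟨i.castSucc, i.succ, rfl, rfl, insertPeak_castSucc i v, insertPeak_succ i v⟩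

lemma IsPeak.exists_eq_insertPeak {w : Fin (L + 2) → Bool} {k : ℕ} (hk : IsPeak w k) :
    ∃ (i : Fin (L + 1)) (v : Fin L → Bool), (i : ℕ) = k ∧ insertPeak i v = w := by
  obtain ⟨j, j', rfl, hj', up, down⟩ := hk
  obtain ⟨i, rfl⟩ : ∃ i : Fin (L + 1), i.castSucc = j := ⟨⟨j, by omega⟩, rfl⟩
  obtain rfl : j' = i.succ := Fin.ext hj'
  have removeNth_down : i.castSucc.removeNth w i = false := by
    rw [Fin.removeNth_apply, Fin.succAbove_castSucc_self, down]
  refine ⟨i, i.removeNth (i.castSucc.removeNth w), rfl, ?_⟩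
  rw [insertPeak, ← removeNth_down, Fin.insertNth_self_removeNth, ← up,
    Fin.insertNth_self_removeNth]

lemma psum_insertPeak_of_le (i : Fin (L + 1)) (v : Fin L → Bool) {k : ℕ} (hk : k ≤ i) :
    psum (insertPeak i v) k = psum v k := by
  rw [insertPeak, psum_insertNth_of_le i.castSucc _ _ hk, psum_insertNth_of_le _ _ _ hk]

lemma psum_insertPeak_succ_self (i : Fin (L + 1)) (v : Fin L → Bool) :
    psum (insertPeak i v) (i + 1) = psum v i + 1 := by
  rw [insertPeak, psum_insertNth_succ_of_le _ _ _ (Fin.val_castSucc i).le,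
    psum_insertNth_of_le _ _ _ le_rfl, stepVal, if_pos rfl, add_comm]

lemma psum_insertPeak_add_two_of_le (i : Fin (L + 1)) (v : Fin L → Bool) {k : ℕ} (hk : i ≤ k) :
    psum (insertPeak i v) (k + 2) = psum v k := by
  rw [insertPeak, psum_insertNth_succ_of_le i.castSucc _ _ (Nat.le_succ_of_le hk),
    psum_insertNth_succ_of_le _ _ _ hk]
  simp [stepVal]

lemma isDyck_insertPeak_iff (i : Fin (L + 1)) (v : Fin L → Bool) :
    IsDyck (insertPeak i v) ↔ IsDyck v := by
  refine and_congr ?_ ⟨fun nonneg k ↦ ?_, fun nonneg k ↦ ?_⟩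
  · rw [IsBridge, IsBridge, psum_insertPeak_add_two_of_le i v i.is_le]
  · rcases le_total k i with hk | hk
    · exact psum_insertPeak_of_le i v hk ▸ nonneg k
    · exact psum_insertPeak_add_two_of_le i v hk ▸ nonneg (k + 2)
  · obtain hk | rfl | ⟨k, hk, rfl⟩ : k ≤ i ∨ k = i + 1 ∨ ∃ k', (i : ℕ) ≤ k' ∧ k = k' + 2 := by
      by_cases hk : (i : ℕ) + 2 ≤ k
      · exact .inr (.inr ⟨k - 2, by omega, by omega⟩)
      · omega
    · exact psum_insertPeak_of_le i v hk ▸ nonneg k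
    · rw [psum_insertPeak_succ_self]
      exact Int.le_add_one (nonneg i)
    · exact psum_insertPeak_add_two_of_le i v hk ▸ nonneg k

lemma card_isDyck_isPeak (L : ℕ) :
    Nat.card {p : (Fin (L + 2) → Bool) × ℕ // IsDyck p.1 ∧ IsPeak p.1 p.2} =
      Nat.card {v : Fin L → Bool // IsDyck v} * (L + 1) := by
  let markedPeak (q : {v : Fin L → Bool // IsDyck v} × Fin (L + 1)) :
      {p : (Fin (L + 2) → Bool) × ℕ // IsDyck p.1 ∧ IsPeak p.1 p.2} :=
    ⟨(insertPeak q.2 q.1, q.2), (isDyck_insertPeak_iff _ _).2 q.1.2, isPeak_insertPeak _ _⟩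
  have injective : Function.Injective markedPeak := by
    rintro ⟨⟨v, hv⟩, i⟩ ⟨⟨v', hv'⟩, i'⟩ h
    obtain ⟨same_word, same_position⟩ := Prod.ext_iff.1 (Subtype.ext_iff.1 h)
    obtain rfl : i = i' := Fin.ext same_position
    obtain rfl : v = v' := insertPeak_injective i same_word
    rfl
  have surjective : Function.Surjective markedPeak := by
    rintro ⟨⟨w, k⟩, hw, hk⟩
    obtain ⟨i, v, rfl, rfl⟩ := hk.exists_eq_insertPeak
    exact ⟨⟨⟨v, (isDyck_insertPeak_iff i v).1 hw⟩, i⟩, rfl⟩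
  rw [← Nat.card_eq_of_bijective markedPeak ⟨injective, surjective⟩, Nat.card_prod, Nat.card_fin]

end PeakInsertion

section DyckWord

variable {L : ℕ}

/-- The dictionary between the letters `true`, `false` and the steps `U`, `D` of `DyckWord`. -/
def boolEquivDyckStep : Bool ≃ DyckStep where
  toFun b := if b then .U else .D
  invFun s := s = .U
  left_inv b := by cases b <;> rfl
  right_inv s := by cases s <;> rfl

/-- The word `w` as a list of steps, the representation of paths underlying `DyckWord`. -/
def dyckSteps (w : Fin L → Bool) : List DyckStep :=
  (List.ofFn w).map boolEquivDyckStep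

lemma length_dyckSteps (w : Fin L → Bool) : (dyckSteps w).length = L := by
  simp [dyckSteps]

lemma dyckSteps_injective : Function.Injective (dyckSteps (L := L)) :=
  boolEquivDyckStep.injective.list_map.comp List.ofFn_injective

lemma exists_dyckSteps_eq (l : List DyckStep) : ∃ w : Fin l.length → Bool, dyckSteps w = l :=
  ⟨fun j ↦ boolEquivDyckStep.symm (l.get j), by simp [dyckSteps, Function.comp_def]⟩

lemma sum_map_stepVal (l : List Bool) :
    (l.map stepVal).sum =
      (l.map boolEquivDyckStep).count .U - (l.map boolEquivDyckStep).count .D := by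
  induction l with
  | nil => rfl
  | cons b l ih =>
    cases b <;> simp [stepVal, boolEquivDyckStep, ih] <;> ring

lemma psum_eq_count_sub_count (w : Fin L → Bool) (k : ℕ) :
    psum w k = ((dyckSteps w).take k).count .U - ((dyckSteps w).take k).count .D := by
  rw [dyckSteps, ← List.map_take, ← sum_map_stepVal, List.map_take, List.map_ofFn,
    List.sum_take_ofFn, Finset.sum_filter]
  rfl

lemma isDyck_iff_count (w : Fin L → Bool) :
    IsDyck w ↔ (dyckSteps w).count .U = (dyckSteps w).count .D ∧
      ∀ k, ((dyckSteps w).take k).count .D ≤ ((dyckSteps w).take k).count .U := by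
  simp only [IsDyck, IsBridge, psum_eq_count_sub_count, sub_eq_zero, sub_nonneg, Nat.cast_inj,
    Nat.cast_le, List.take_of_length_le (length_dyckSteps w).le]

/-- The Dyck word, in the sense of `DyckWord`, with the same steps as the Dyck path `w`. -/
def IsDyck.toDyckWord {w : Fin L → Bool} (hw : IsDyck w) : DyckWord where
  toList := dyckSteps w
  count_U_eq_count_D := ((isDyck_iff_count w).1 hw).1
  count_D_le_count_U := ((isDyck_iff_count w).1 hw).2

lemma card_isDyck_eq_card_dyckWord (L : ℕ) :
    Nat.card {w : Fin L → Bool // IsDyck w} = Nat.card {p : DyckWord // p.toList.length = L} := by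
  let toDyckWord (w : {w : Fin L → Bool // IsDyck w}) : {p : DyckWord // p.toList.length = L} :=
    ⟨w.2.toDyckWord, length_dyckSteps w.1⟩
  refine Nat.card_eq_of_bijective toDyckWord ⟨fun w w' h ↦ ?_, ?_⟩
  · exact Subtype.ext (dyckSteps_injective (congrArg (fun p ↦ p.1.toList) h))
  · rintro ⟨p, rfl⟩
    obtain ⟨w, hw⟩ := exists_dyckSteps_eq p.toList
    have isDyck : IsDyck w := by
      rw [isDyck_iff_count, hw]
      exact ⟨p.count_U_eq_count_D, p.count_D_le_count_U⟩
    exact ⟨⟨w, isDyck⟩, Subtype.ext (DyckWord.ext hw)⟩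

lemma card_isDyck (m : ℕ) : Nat.card {w : Fin (2 * m) → Bool // IsDyck w} = catalan m := by
  have length_eq_iff (p : DyckWord) : p.toList.length = 2 * m ↔ p.semilength = m := by
    rw [← p.two_mul_semilength_eq_length, Nat.mul_right_inj two_ne_zero]
  rw [card_isDyck_eq_card_dyckWord, Nat.card_congr (Equiv.subtypeEquivRight length_eq_iff),
    Nat.card_eq_fintype_card, DyckWord.card_dyckWord_semilength_eq_catalan]

end DyckWord

lemma catalan_mul_two_mul_add_one (m : ℕ) :
    catalan m * (2 * m + 1) = (2 * m + 1).choose (m + 1) := by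
  refine Nat.eq_of_mul_eq_mul_right m.succ_pos ?_
  calc catalan m * (2 * m + 1) * (m + 1)
      = (2 * m + 1) * ((m + 1) * catalan m) := by ring
    _ = (2 * m + 1) * (2 * m).choose m := by
      rw [succ_mul_catalan_eq_centralBinom, Nat.centralBinom_eq_two_mul_choose]
    _ = (2 * m + 1).choose (m + 1) * (m + 1) := Nat.add_one_mul_choose_eq _ _

/-- For every integer `n ≥ 1`, the total number of peaks in all
Dyck paths of length `2n` (i.e. the number of pairs `(P, i)` with `P` a Dyck
path of length `2n` and `i` a peak of `P`) equals `C(2n - 1, n)`. -/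
theorem stmt_4 (n : ℕ) (hn : 1 ≤ n) :
    Nat.card {p : (Fin (2 * n) → Bool) × ℕ // IsDyck p.1 ∧ IsPeak p.1 p.2} =
      Nat.choose (2 * n - 1) n := by
  obtain ⟨m, rfl⟩ := Nat.exists_eq_add_of_le' hn
  calc Nat.card {p : (Fin (2 * m + 2) → Bool) × ℕ // IsDyck p.1 ∧ IsPeak p.1 p.2}
      = Nat.card {w : Fin (2 * m) → Bool // IsDyck w} * (2 * m + 1) := card_isDyck_isPeak (2 * m)
    _ = catalan m * (2 * m + 1) := by rw [card_isDyck]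
    _ = (2 * m + 1).choose (m + 1) := catalan_mul_two_mul_add_one m
end

section
/- For all integers n ≥ 1 and 1 ≤ i ≤ n, the number of little Schröder paths of semi-length n with exactly i up steps equals (1/(n+1))·C(n+i, i)·C(n−1, i−1). -/
/-- Schröder steps are encoded by `Fin 3`: `0` is an up step `u = (1,1)`,
`1` is a down step `d = (1,-1)`, and `2` is a horizontal step `h = (2,0)`. -/
def IsLargeSchroeder (l : List (Fin 3)) : Prop :=
  l.count 0 = l.count 1 ∧ ∀ p, p <+: l → p.count 1 ≤ p.count 0

/-- A little Schröder path: a large Schröder path with no horizontal step at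
height `0`, i.e. every `h` step is preceded by strictly more `u`'s than `d`'s. -/
def IsLittleSchroeder (l : List (Fin 3)) : Prop :=
  IsLargeSchroeder l ∧ ∀ p q, l = p ++ (2 : Fin 3) :: q → p.count 1 < p.count 0

/-- The semi-length of a Schröder word: number of `u` steps plus number of `h` steps. -/
def schroederSemiLength (l : List (Fin 3)) : ℕ := l.count 0 + l.count 2

/-!
Write `ℓ(k, j, m)` and `L(k, j, m)` for the numbers of little and of large Schröder paths that start
at height `k` and have `j` up steps and `m` horizontal steps. Both are determined by splitting off
the first step, and this recurrence alone gives

* `L(k, j, m) = C(2j + k + m, m) * (C(2j + k, j + k) - C(2j + k, j + k + 1))`, where the second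
  factor is the reflection principle for the up and down steps;
* `L(k, j, m) = ℓ(k, j, m) + ℓ(k + 1, j, m - 1)`: one level up, down steps to height `0` make up
  for the horizontal steps at height `0` that little paths lack.

Since a nonempty little path starts with an up step, `ℓ(1, j, m) = ℓ(0, j + 1, m)`. At `k = 0` the
two facts therefore express `ℓ(0, j + 1, m)` through `ℓ(0, j, m + 1)`, and induction on `j`
finishes.
-/

theorem forall_prefix_cons_iff {α : Type*} {a : α} {l : List α} {P : List α → Prop} :
    (∀ p, p <+: a :: l → P p) ↔ P [] ∧ ∀ p, p <+: l → P (a :: p) := by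
  simp only [List.prefix_cons_iff]
  grind

theorem forall_cons_eq_append_iff {α : Type*} {a c : α} {l : List α} {P : List α → Prop} :
    (∀ p q, a :: l = p ++ c :: q → P p) ↔
      (a = c → P []) ∧ ∀ p q, l = p ++ c :: q → P (a :: p) := by
  refine ⟨fun h => ⟨fun hac => h [] l (by rw [hac, List.nil_append]), fun p q hl => ?_⟩, ?_⟩
  · exact h (a :: p) q (by rw [hl, List.cons_append])
  · rintro ⟨hnil, hcons⟩ (_ | ⟨b, p⟩) q h
    · exact hnil (List.cons_eq_cons.1 h).1
    · obtain ⟨rfl, hl⟩ := List.cons_eq_cons.1 h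
      exact hcons p q hl

theorem ncard_eq_sum_ncard_cons {α : Type*} [Fintype α] {s : Set (List α)} (hs : s.Finite)
    (hnil : [] ∉ s) : s.ncard = ∑ a, {l | a :: l ∈ s}.ncard := by
  have hunion : s = ⋃ a, List.cons a '' {l | a :: l ∈ s} := by
    ext (_ | ⟨a, l⟩) <;> simp [hnil]
  have hfinite (a : α) : (List.cons a '' {l | a :: l ∈ s}).Finite :=
    hs.subset (by rintro _ ⟨l, hl, rfl⟩; exact hl)
  have hdisjoint : Pairwise (Function.onFun Disjoint fun a => List.cons a '' {l | a :: l ∈ s}) := by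
    intro a b hab
    simp only [Function.onFun, Set.disjoint_left]
    rintro _ ⟨l, -, rfl⟩ ⟨l', -, h⟩
    exact hab (List.cons_eq_cons.1 h).1.symm
  conv_lhs => rw [hunion, Set.ncard_iUnion_of_finite hfinite hdisjoint, finsum_eq_sum_of_fintype]
  exact Finset.sum_congr rfl fun a _ => Set.ncard_image_of_injective _ List.cons_injective

/-- The word `l`, read as steps from height `k`, stays at nonnegative height, ends at height `0`
and makes horizontal steps only at heights at least `b`. For `k = 0`, these are the large
Schröder paths when `b = 0` and the little ones when `b = 1`. -/
def IsSchroederTail (b : ℕ) : ℕ → List (Fin 3) → Prop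
  | k, [] => k = 0
  | k, 0 :: l => IsSchroederTail b (k + 1) l
  | k, 1 :: l => 0 < k ∧ IsSchroederTail b (k - 1) l
  | k, 2 :: l => b ≤ k ∧ IsSchroederTail b k l

theorem isSchroederTail_iff {b k : ℕ} {l : List (Fin 3)} :
    IsSchroederTail b k l ↔ k + l.count 0 = l.count 1 ∧
      (∀ p, p <+: l → p.count 1 ≤ k + p.count 0) ∧
      ∀ p q, l = p ++ (2 : Fin 3) :: q → b + p.count 1 ≤ k + p.count 0 := by
  induction l generalizing k with
  | nil => simp [IsSchroederTail]
  | cons a l ih =>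
    rw [forall_prefix_cons_iff, forall_cons_eq_append_iff]
    obtain rfl | rfl | rfl : a = 0 ∨ a = 1 ∨ a = 2 := by decide +revert
    · simp [IsSchroederTail, ih, add_assoc, add_comm 1]
    · rcases k with _ | k
      · have hbelow : ¬∀ p, p <+: l → (1 :: p).count 1 ≤ 0 + (1 :: p).count (0 : Fin 3) :=
          fun h => by simpa using h [] List.nil_prefix
        simp only [IsSchroederTail, lt_irrefl, hbelow, false_and, and_false]
      · simp [IsSchroederTail, ih, add_right_comm k 1, ← add_assoc]
    · simp only [IsSchroederTail, ih]
      simp [and_left_comm]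

theorem isLittleSchroeder_iff {l : List (Fin 3)} :
    IsLittleSchroeder l ↔ IsSchroederTail 1 0 l := by
  simp [isSchroederTail_iff, IsLittleSchroeder, IsLargeSchroeder, and_assoc, add_comm 1]

/-- The Schröder tails from height `k` with `j` up steps and `m` horizontal steps. -/
def schroederTails (b k j m : ℕ) : Set (List (Fin 3)) :=
  {l | IsSchroederTail b k l ∧ l.count 0 = j ∧ l.count 2 = m}

/-- The number of Schröder tails from height `k` with `j` up steps and `m` horizontal steps:
`L(k, j, m)` in the notation above for `b = 0`, and `ℓ(k, j, m)` for `b = 1`. -/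
noncomputable def schroederCount (b k j m : ℕ) : ℕ :=
  (schroederTails b k j m).ncard

theorem finite_schroederTails (b k j m : ℕ) : (schroederTails b k j m).Finite := by
  refine (List.finite_length_eq (Fin 3) (2 * j + k + m)).subset ?_
  rintro l ⟨hl, hj, hm⟩
  have hlength : ∑ a, (l : Multiset (Fin 3)).count a = l.length :=
    Multiset.sum_count_eq_card fun a _ => Finset.mem_univ a
  have hdown := (isSchroederTail_iff.1 hl).1
  simp only [Fin.sum_univ_three, Multiset.coe_count] at hlength
  simp only [Set.mem_ofPred_eq]
  omega

/-- The recurrence that removing the first step gives for the number `f k j m` of Schröder tails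
from height `k` with `j` up steps and `m` horizontal steps. The three summands belong to an
up, a down and a horizontal first step. -/
def FirstStepRecurrence {R : Type*} [AddMonoidWithOne R] (b : ℕ) (f : ℕ → ℕ → ℕ → R) : Prop :=
  f 0 0 0 = 1 ∧ ∀ k j m, 0 < k + j + m →
    f k j m = (if 0 < j then f (k + 1) (j - 1) m else 0) + (if 0 < k then f (k - 1) j m else 0) +
      (if b ≤ k ∧ 0 < m then f k j (m - 1) else 0)

namespace FirstStepRecurrence

theorem unique {R : Type*} [AddMonoidWithOne R] {b : ℕ} {f g : ℕ → ℕ → ℕ → R}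
    (hf : FirstStepRecurrence b f) (hg : FirstStepRecurrence b g) (k j m : ℕ) :
    f k j m = g k j m := by
  induction hN : 2 * j + k + m using Nat.strong_induction_on generalizing k j m with
  | _ N ih =>
    rcases Nat.eq_zero_or_pos (k + j + m) with h | h
    · obtain ⟨⟨rfl, rfl⟩, rfl⟩ : (k = 0 ∧ j = 0) ∧ m = 0 := by omega
      rw [hf.1, hg.1]
    · rw [hf.2 k j m h, hg.2 k j m h]
      congr 1
      · congr 1
        · exact if_ctx_congr Iff.rfl (fun _ => ih _ (by omega) _ _ _ rfl) fun _ => rfl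
        · exact if_ctx_congr Iff.rfl (fun _ => ih _ (by omega) _ _ _ rfl) fun _ => rfl
      · exact if_ctx_congr Iff.rfl (fun _ => ih _ (by omega) _ _ _ rfl) fun _ => rfl

theorem natCast {R : Type*} [AddMonoidWithOne R] {b : ℕ}
    {f : ℕ → ℕ → ℕ → ℕ} (hf : FirstStepRecurrence b f) :
    FirstStepRecurrence b fun k j m => (f k j m : R) := by
  refine ⟨by simp only [hf.1, Nat.cast_one], fun k j m hpos => ?_⟩
  simp only [hf.2 k j m hpos, Nat.cast_add, Nat.cast_ite, Nat.cast_zero]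

theorem add_raised {R : Type*} [AddCommMonoidWithOne R] {f : ℕ → ℕ → ℕ → R}
    (hf : FirstStepRecurrence 1 f) :
    FirstStepRecurrence 0 fun k j m => f k j m + if 0 < m then f (k + 1) j (m - 1) else 0 := by
  obtain ⟨hzero, hstep⟩ := hf
  refine ⟨by simpa using hzero, ?_⟩
  rintro k j (_ | m) hpos
  · simpa using hstep k j 0 hpos
  simp only [Nat.succ_pos, Nat.add_sub_cancel, zero_le, true_and, if_true]
  rcases k with _ | k
  · have hlow : f 0 j (m + 1) = if 0 < j then f 1 (j - 1) (m + 1) else 0 := by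
      simpa using hstep 0 j (m + 1) hpos
    have hraised : f 1 j m = (if 0 < j then f 2 (j - 1) m else 0) + f 0 j m +
        if 0 < m then f 1 j (m - 1) else 0 := by
      simpa using hstep 1 j m (by omega)
    simp only [zero_add, lt_irrefl, if_false, add_zero, ite_add_zero, hlow, hraised]
    abel
  · have hlow : f (k + 1) j (m + 1) = (if 0 < j then f (k + 2) (j - 1) (m + 1) else 0) +
        f k j (m + 1) + f (k + 1) j m := by
      simpa using hstep (k + 1) j (m + 1) hpos
    have hraised : f (k + 2) j m = (if 0 < j then f (k + 3) (j - 1) m else 0) + f (k + 1) j m +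
        if 0 < m then f (k + 2) j (m - 1) else 0 := by
      simpa using hstep (k + 2) j m (by omega)
    simp only [Nat.succ_pos, if_true, Nat.add_sub_cancel, ite_add_zero]
    rw [hlow, hraised]
    abel

end FirstStepRecurrence

theorem firstStepRecurrence_schroederCount (b : ℕ) :
    FirstStepRecurrence b (schroederCount b) := by
  constructor
  · have hempty : schroederTails b 0 0 0 = {[]} := by
      ext l
      rcases l with _ | ⟨a, l⟩
      · simp [schroederTails, IsSchroederTail]
      · fin_cases a <;> simp [schroederTails, IsSchroederTail]
    rw [schroederCount, hempty, Set.ncard_singleton]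
  · intro k j m hpos
    have hnil : [] ∉ schroederTails b k j m := by
      rintro ⟨hk, hj, hm⟩
      simp_all [IsSchroederTail]
    have hup : {l | 0 :: l ∈ schroederTails b k j m} =
        if 0 < j then schroederTails b (k + 1) (j - 1) m else ∅ := by
      ext l; split_ifs <;> simp [schroederTails, IsSchroederTail] <;> omega
    have hdown : {l | 1 :: l ∈ schroederTails b k j m} =
        if 0 < k then schroederTails b (k - 1) j m else ∅ := by
      ext l; split_ifs <;> simp [schroederTails, IsSchroederTail, *]
    have hflat : {l | 2 :: l ∈ schroederTails b k j m} =
        if b ≤ k ∧ 0 < m then schroederTails b k j (m - 1) else ∅ := by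
      ext l; split_ifs <;> simp [schroederTails, IsSchroederTail] <;> grind
    simp only [schroederCount, ncard_eq_sum_ncard_cons (finite_schroederTails b k j m) hnil,
      Fin.sum_univ_three, hup, hdown, hflat, apply_ite Set.ncard, Set.ncard_empty]

/-- The number of paths from height `k` to height `0` with `j` up steps, `j + k` down steps and no
others that stay at nonnegative height, in the form given by the reflection principle. The binomial
coefficients count by down steps, so that no truncated subtraction occurs. -/
def ballotNumber (k j : ℕ) : ℤ :=
  (2 * j + k).choose (j + k) - (2 * j + k).choose (j + k + 1)

theorem ballotNumber_eq_add {k j : ℕ} (hpos : 0 < k + j) :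
    ballotNumber k j = (if 0 < j then ballotNumber (k + 1) (j - 1) else 0) +
      (if 0 < k then ballotNumber (k - 1) j else 0) := by
  rcases j with _ | j
  · obtain ⟨k, rfl⟩ : ∃ k', k = k' + 1 := ⟨k - 1, by omega⟩
    simp [ballotNumber]
  have hpascal : ballotNumber k (j + 1) =
      ((2 * j + k + 1).choose (j + k) : ℤ) - (2 * j + k + 1).choose (j + k + 2) := by
    simp only [ballotNumber, show 2 * (j + 1) + k = 2 * j + k + 1 + 1 by ring,
      show j + 1 + k = j + k + 1 by ring, Nat.choose_succ_succ (2 * j + k + 1)]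
    push_cast
    ring
  rw [hpascal]
  rcases k with _ | k
  · have hsymm : (2 * j + 1).choose (j + 1) = (2 * j + 1).choose j := Nat.choose_symm_half j
    simp [ballotNumber, hsymm]
  · simp [ballotNumber, show 2 * (j + 1) + k = 2 * j + (k + 1) + 1 by ring,
      show j + 1 + k = j + (k + 1) by ring, ← add_assoc]

theorem succ_mul_ballotNumber_zero (j : ℕ) :
    (j + 1) * ballotNumber 0 j = (2 * j).choose j := by
  have h := Nat.choose_succ_right_eq (2 * j) j
  rw [show 2 * j - j = j by omega] at h
  zify at h
  simp only [ballotNumber, add_zero]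
  linear_combination -h

theorem firstStepRecurrence_choose_mul_ballotNumber :
    FirstStepRecurrence 0 fun k j m => ((2 * j + k + m).choose m : ℤ) * ballotNumber k j := by
  refine ⟨by simp [ballotNumber], fun k j m hpos => ?_⟩
  rcases m with _ | m
  · simp only [add_zero, Nat.choose_zero_right, Nat.cast_one, one_mul, lt_irrefl, and_false,
      if_false]
    exact ballotNumber_eq_add hpos
  have hballot : ((2 * j + k + m).choose (m + 1) : ℤ) * ballotNumber k j =
      (if 0 < j then ((2 * (j - 1) + (k + 1) + (m + 1)).choose (m + 1) : ℤ) *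
        ballotNumber (k + 1) (j - 1) else 0) +
      (if 0 < k then ((2 * j + (k - 1) + (m + 1)).choose (m + 1) : ℤ) *
        ballotNumber (k - 1) j else 0) := by
    rcases Nat.eq_zero_or_pos (k + j) with hzero | hpos
    · obtain ⟨rfl, rfl⟩ := Nat.add_eq_zero_iff.1 hzero
      simp
    · rw [ballotNumber_eq_add hpos, mul_add, mul_ite, mul_ite, mul_zero]
      congr! 5 <;> omega
  have hpascal : ((2 * j + k + (m + 1)).choose (m + 1) : ℤ) =
      (2 * j + k + m).choose m + (2 * j + k + m).choose (m + 1) :=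
    mod_cast Nat.choose_succ_succ _ m
  simp only [← hballot, hpascal, zero_le, Nat.succ_pos, and_self, if_true, Nat.add_sub_cancel]
  ring

theorem schroederCount_large_eq_choose_mul_ballotNumber (k j m : ℕ) :
    (schroederCount 0 k j m : ℤ) = (2 * j + k + m).choose m * ballotNumber k j :=
  (firstStepRecurrence_schroederCount 0).natCast.unique
    firstStepRecurrence_choose_mul_ballotNumber k j m

theorem schroederCount_large_eq_little_add_raised (k j m : ℕ) :
    schroederCount 0 k j m = schroederCount 1 k j m +
      if 0 < m then schroederCount 1 (k + 1) j (m - 1) else 0 :=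
  (firstStepRecurrence_schroederCount 0).unique
    (firstStepRecurrence_schroederCount 1).add_raised k j m

theorem schroederCount_succ_up_of_pos {b : ℕ} (hb : 0 < b) (j m : ℕ) :
    schroederCount b 0 (j + 1) m = schroederCount b 1 j m := by
  simpa [hb.ne'] using (firstStepRecurrence_schroederCount b).2 0 (j + 1) m (by omega)

theorem schroederCount_no_up_of_pos {b : ℕ} (hb : 0 < b) (m : ℕ) :
    schroederCount b 0 0 (m + 1) = 0 := by
  simpa [hb.ne'] using (firstStepRecurrence_schroederCount b).2 0 0 (m + 1) (by omega)

theorem schroederCount_little_add_succ_up (j m : ℕ) :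
    (schroederCount 1 0 j (m + 1) + schroederCount 1 0 (j + 1) m : ℚ) =
      (2 * j + m + 1).choose (m + 1) * (2 * j).choose j / (j + 1) := by
  have hlarge := schroederCount_large_eq_choose_mul_ballotNumber 0 j (m + 1)
  have hballot := succ_mul_ballotNumber_zero j
  rw [schroederCount_large_eq_little_add_raised, if_pos m.succ_pos, zero_add, Nat.add_sub_cancel,
    ← schroederCount_succ_up_of_pos one_pos] at hlarge
  qify at hlarge hballot
  rw [hlarge, ← hballot, add_zero, ← add_assoc]
  field_simp

open Nat in
theorem choose_mul_choose_div_eq_add (j m : ℕ) :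
    ((2 * j + m + 3).choose (m + 1) * (2 * j + 2).choose (j + 1) / (j + 2) : ℚ) =
      (2 * j + m + 3).choose (j + 1) * (j + m + 1).choose j / (j + m + 3) +
        (2 * j + m + 4).choose (j + 2) * (j + m + 1).choose (j + 1) / (j + m + 3) := by
  have hchoose {a b c : ℕ} (h : c = a + b) : (c.choose a : ℚ) = c ! / (a ! * b !) := by
    rw [h, Nat.cast_add_choose]
  rw [hchoose (show 2 * j + m + 3 = m + 1 + (2 * j + 2) by ring),
    hchoose (show 2 * j + 2 = j + 1 + (j + 1) by ring),
    hchoose (show 2 * j + m + 3 = j + 1 + (j + m + 2) by ring),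
    hchoose (show j + m + 1 = j + (m + 1) by ring),
    hchoose (show 2 * j + m + 4 = j + 2 + (j + m + 2) by ring),
    hchoose (show j + m + 1 = j + 1 + m by ring)]
  simp only [Nat.factorial_succ (2 * j + m + 3), Nat.factorial_succ (j + m + 1),
    Nat.factorial_succ (j + 1), Nat.factorial_succ j, Nat.factorial_succ m]
  push_cast
  field_simp [Nat.factorial_ne_zero]
  ring

theorem schroederCount_little_succ_up_eq_choose (j m : ℕ) :
    (schroederCount 1 0 (j + 1) m : ℚ) =
      (2 * j + m + 2).choose (j + 1) * (j + m).choose j / (j + m + 2) := by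
  induction j generalizing m with
  | zero =>
    have hsum := schroederCount_little_add_succ_up 0 m
    rw [schroederCount_no_up_of_pos one_pos, Nat.cast_zero, zero_add] at hsum
    rw [hsum]
    have hne : (m + 2 : ℚ) ≠ 0 := by positivity
    simp [hne]
  | succ j ih =>
    have hsum := schroederCount_little_add_succ_up (j + 1) m
    have hbinom := choose_mul_choose_div_eq_add j m
    rw [ih (m + 1)] at hsum
    linear_combination (norm := (push_cast; ring_nf)) hsum + hbinom

/-- For all integers `n ≥ 1` and `1 ≤ i ≤ n`, the number of
little Schröder paths of semi-length `n` with exactly `i` up steps equals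
`(1/(n+1)) * C(n+i, i) * C(n-1, i-1)`. -/
theorem stmt_11 (n i : ℕ) (hn : 1 ≤ n) (hi : 1 ≤ i) (hin : i ≤ n) :
    (Nat.card {l : List (Fin 3) // IsLittleSchroeder l ∧
        schroederSemiLength l = n ∧ l.count 0 = i} : ℚ) =
      (1 / (n + 1)) * Nat.choose (n + i) i * Nat.choose (n - 1) (i - 1) := by
  obtain ⟨j, rfl⟩ : ∃ j, i = j + 1 := ⟨i - 1, by omega⟩
  obtain ⟨m, rfl⟩ : ∃ m, n = j + 1 + m := ⟨n - (j + 1), by omega⟩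
  have hpaths : {l : List (Fin 3) | IsLittleSchroeder l ∧
      schroederSemiLength l = j + 1 + m ∧ l.count 0 = j + 1} = schroederTails 1 0 (j + 1) m := by
    ext l
    simp only [schroederTails, schroederSemiLength, ← isLittleSchroeder_iff, Set.mem_ofPred_eq]
    exact and_congr_right fun _ => by omega
  have hcard : Nat.card {l : List (Fin 3) // IsLittleSchroeder l ∧
      schroederSemiLength l = j + 1 + m ∧ l.count 0 = j + 1} = schroederCount 1 0 (j + 1) m :=
    congrArg Set.ncard hpaths
  rw [hcard, schroederCount_little_succ_up_eq_choose,
    show j + 1 + m + (j + 1) = 2 * j + m + 2 by ring,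
    show j + 1 + m - 1 = j + m by omega, Nat.add_sub_cancel]
  push_cast
  ring
end

section
/- For all integers n ≥ 0 and 0 ≤ i ≤ n, the number of large Schröder paths of semi-length n with exactly i up steps equals (1/(i+1))·C(n+i, i)·C(n, i). -/
/-!
Deleting the level steps of a large Schröder path with `i` up steps leaves a Dyck word of length
`2 * i`. If the path has semi-length `n`, it is a word of length `n + i`, so it is recovered from
the Dyck word by choosing which `2 * i` of its `n + i` positions are not level steps. Hence there
are `catalan i * (n + i).choose (2 * i)` such paths.
-/

section BlankInsertions

variable {α β : Type*} (e : α ≃ Option β)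

/-- The words of length `m` over `α` obtained from `w : List β` by inserting blanks. The equivalence
`e` reads each letter of `α` as a letter of `β` or as the blank `e.symm none`. -/
def blankInsertions (m : ℕ) (w : List β) : Set (List α) :=
  {l | l.filterMap e = w ∧ l.length = m}

theorem pairwise_disjoint_blankInsertions (m : ℕ) :
    Pairwise (Function.onFun Disjoint (blankInsertions e m)) :=
  fun _ _ hne ↦ Set.disjoint_left.mpr fun _ hv hw ↦ hne (hv.1.symm.trans hw.1)

theorem blankInsertions_zero_nil : blankInsertions e 0 [] = {[]} := by
  ext (_ | _) <;> simp [blankInsertions]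

theorem blankInsertions_zero_cons (x : β) (w : List β) : blankInsertions e 0 (x :: w) = ∅ := by
  ext (_ | _) <;> simp [blankInsertions]

theorem blankInsertions_succ_nil (m : ℕ) :
    blankInsertions e (m + 1) [] = List.cons (e.symm none) '' blankInsertions e m [] := by
  ext (_ | ⟨a, l⟩)
  · simp [blankInsertions]
  · obtain ⟨_ | y, rfl⟩ := e.symm.surjective a <;> simp [blankInsertions]

theorem blankInsertions_succ_cons (m : ℕ) (x : β) (w : List β) :
    blankInsertions e (m + 1) (x :: w) =
      List.cons (e.symm (some x)) '' blankInsertions e m w ∪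
        List.cons (e.symm none) '' blankInsertions e m (x :: w) := by
  ext (_ | ⟨a, l⟩)
  · simp [blankInsertions]
  · obtain ⟨_ | y, rfl⟩ := e.symm.surjective a
    · simp [blankInsertions]
    · simp only [blankInsertions, Set.mem_ofPred_eq, Set.mem_union, Set.mem_image,
        List.filterMap_cons, Equiv.apply_symm_apply, List.length_cons, List.cons.injEq,
        EmbeddingLike.apply_eq_iff_eq, Option.some.injEq, reduceCtorEq]
      grind

theorem encard_blankInsertions (m : ℕ) (w : List β) :
    (blankInsertions e m w).encard = m.choose w.length := by
  induction m generalizing w with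
  | zero =>
    cases w with
    | nil => simp [blankInsertions_zero_nil]
    | cons x w => simp [blankInsertions_zero_cons]
  | succ m ih =>
    cases w with
    | nil => simp [blankInsertions_succ_nil, List.cons_injective.encard_image, ih]
    | cons x w =>
      have hdisj : Disjoint (List.cons (e.symm (some x)) '' blankInsertions e m w)
          (List.cons (e.symm none) '' blankInsertions e m (x :: w)) := by
        rw [Set.disjoint_left]
        rintro _ ⟨l, -, rfl⟩
        simp
      rw [blankInsertions_succ_cons, Set.encard_union_eq hdisj, List.cons_injective.encard_image,
        List.cons_injective.encard_image, ih, ih, List.length_cons, Nat.choose_succ_succ,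
        Nat.cast_add]

end BlankInsertions

/-- Reads a Schröder step as a Dyck step, with the level step `2` as the blank. -/
def schroederStepEquiv : Fin 3 ≃ Option DyckStep where
  toFun := ![some .U, some .D, none]
  invFun
    | some .U => 0
    | some .D => 1
    | none => 2
  left_inv x := by fin_cases x <;> rfl
  right_inv := by rintro (_ | _ | _) <;> rfl

theorem count_U_filterMap_schroederStepEquiv (l : List (Fin 3)) :
    (l.filterMap schroederStepEquiv).count .U = l.count 0 := by
  rw [List.count_filterMap, List.count]
  congr 1
  decide

theorem count_D_filterMap_schroederStepEquiv (l : List (Fin 3)) :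
    (l.filterMap schroederStepEquiv).count .D = l.count 1 := by
  rw [List.count_filterMap, List.count]
  congr 1
  decide

theorem isLargeSchroeder_iff_exists_dyckWord (l : List (Fin 3)) :
    IsLargeSchroeder l ↔ ∃ w : DyckWord, l.filterMap schroederStepEquiv = w.toList := by
  constructor
  · rintro ⟨hcount, hprefix⟩
    refine ⟨⟨l.filterMap schroederStepEquiv, ?_, fun k ↦ ?_⟩, rfl⟩
    · rw [count_U_filterMap_schroederStepEquiv, count_D_filterMap_schroederStepEquiv, hcount]
    · obtain ⟨p, hp, htake⟩ := List.prefix_filterMap_iff.mp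
        (List.take_prefix k (l.filterMap schroederStepEquiv))
      rw [htake, count_U_filterMap_schroederStepEquiv, count_D_filterMap_schroederStepEquiv]
      exact hprefix p hp
  · rintro ⟨w, hw⟩
    refine ⟨?_, fun p hp ↦ ?_⟩
    · rw [← count_U_filterMap_schroederStepEquiv, ← count_D_filterMap_schroederStepEquiv, hw,
        w.count_U_eq_count_D]
    · have hprefix : p.filterMap schroederStepEquiv <+: w.toList := hw ▸ hp.filterMap _
      rw [← count_U_filterMap_schroederStepEquiv, ← count_D_filterMap_schroederStepEquiv,
        List.prefix_iff_eq_take.mp hprefix]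
      exact w.count_D_le_count_U _

theorem length_eq_sum_count {α : Type*} [Fintype α] [DecidableEq α] (l : List α) :
    l.length = ∑ a, l.count a := by
  simpa using (Multiset.sum_count_eq_card (m := (l : Multiset α))
    fun a _ ↦ Finset.mem_univ a).symm

theorem IsLargeSchroeder.length_eq {l : List (Fin 3)} (hl : IsLargeSchroeder l) :
    l.length = schroederSemiLength l + l.count 0 := by
  rw [length_eq_sum_count, Fin.sum_univ_three, ← hl.1, schroederSemiLength, add_right_comm]

theorem setOf_isLargeSchroeder_eq_iUnion_blankInsertions (n i : ℕ) :
    {l | IsLargeSchroeder l ∧ schroederSemiLength l = n ∧ l.count 0 = i} =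
      ⋃ w : {w : DyckWord // w.semilength = i},
        blankInsertions schroederStepEquiv (n + i) w.1.toList := by
  ext l
  simp only [Set.mem_ofPred_eq, Set.mem_iUnion, Subtype.exists, blankInsertions]
  constructor
  · rintro ⟨hl, rfl, rfl⟩
    obtain ⟨w, hw⟩ := (isLargeSchroeder_iff_exists_dyckWord l).mp hl
    refine ⟨w, ?_, hw, hl.length_eq⟩
    rw [DyckWord.semilength, ← hw, count_U_filterMap_schroederStepEquiv]
  · rintro ⟨w, hi, hw, hlen⟩
    have hl := (isLargeSchroeder_iff_exists_dyckWord l).mpr ⟨w, hw⟩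
    rw [DyckWord.semilength, ← hw, count_U_filterMap_schroederStepEquiv] at hi
    rw [hl.length_eq, hi, Nat.add_right_cancel_iff] at hlen
    exact ⟨hl, hlen, hi⟩

theorem card_isLargeSchroeder (n i : ℕ) :
    Nat.card {l : List (Fin 3) // IsLargeSchroeder l ∧ schroederSemiLength l = n ∧
      l.count 0 = i} = catalan i * (n + i).choose (2 * i) := by
  have hinj : Function.Injective fun w : {w : DyckWord // w.semilength = i} ↦ w.1.toList :=
    fun _ _ h ↦ Subtype.ext (DyckWord.ext h)
  have hfiber (w : {w : DyckWord // w.semilength = i}) :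
      (blankInsertions schroederStepEquiv (n + i) w.1.toList).encard =
        (n + i).choose (2 * i) := by
    rw [encard_blankInsertions, ← w.1.two_mul_semilength_eq_length, w.2]
  have hencard :
      {l | IsLargeSchroeder l ∧ schroederSemiLength l = n ∧ l.count 0 = i}.encard =
        (catalan i * (n + i).choose (2 * i) : ℕ) := by
    rw [setOf_isLargeSchroeder_eq_iUnion_blankInsertions, Set.encard_iUnion_of_finite
      ((pairwise_disjoint_blankInsertions _ _).comp_of_injective hinj), finsum_eq_sum_of_fintype]
    simp [hfiber, DyckWord.card_dyckWord_semilength_eq_catalan]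
  exact congrArg ENat.toNat hencard

theorem succ_mul_catalan_mul_choose (n i : ℕ) :
    (i + 1) * (catalan i * (n + i).choose (2 * i)) = (n + i).choose i * n.choose i :=
  calc (i + 1) * (catalan i * (n + i).choose (2 * i))
      = (n + i).choose (2 * i) * (2 * i).choose i := by
        rw [← mul_assoc, succ_mul_catalan_eq_centralBinom, Nat.centralBinom, mul_comm]
    _ = (n + i).choose i * (n + i - i).choose (2 * i - i) := Nat.choose_mul (by omega)
    _ = (n + i).choose i * n.choose i := by rw [Nat.add_sub_cancel, two_mul, Nat.add_sub_cancel]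

/-- For all integers `n ≥ 0` and `0 ≤ i ≤ n`, the number of
large Schröder paths of semi-length `n` with exactly `i` up steps equals
`(1/(i+1)) * C(n+i, i) * C(n, i)`. -/
theorem stmt_12 (n i : ℕ) (hin : i ≤ n) :
    (Nat.card {l : List (Fin 3) // IsLargeSchroeder l ∧
        schroederSemiLength l = n ∧ l.count 0 = i} : ℚ) =
      (1 / (i + 1)) * Nat.choose (n + i) i * Nat.choose n i := by
  have hcount := succ_mul_catalan_mul_choose n i
  rw [← card_isLargeSchroeder] at hcount
  rw [mul_assoc, one_div, eq_inv_mul_iff_mul_eq₀ (by positivity)]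
  exact_mod_cast hcount
end

section
/- For every integer r ≥ 0, the number of Dyck paths of height at most 2 having exactly r peaks of height 1 and exactly r peaks of height 2 equals (r+1)·s_r, where s_r is the number of little Schröder paths of semi-length r. -/
/-- The total sum of the steps of a `±1` word given as a list. -/
def lsum (l : List Bool) : ℤ := (l.map stepVal).sum

/-- A Dyck path (of arbitrary length), as a list: total sum `0` and every
prefix sum nonnegative. -/
def IsDyckList (l : List Bool) : Prop :=
  lsum l = 0 ∧ ∀ p, p <+: l → 0 ≤ lsum p

/-- The number of peaks of height `h` of the word `l`: occurrences of `ud`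
whose up step ends at altitude `h`. -/
noncomputable def listPeakCount (l : List Bool) (h : ℤ) : ℕ :=
  Nat.card {pq : List Bool × List Bool //
    l = pq.1 ++ true :: false :: pq.2 ∧ lsum pq.1 + 1 = h}

/-!
Deleting the first letter of a word gives recurrences on both sides.

Little Schröder paths from height `n + 1 - i` with `i` up and `k` level steps obey a ballot-type
recurrence, whose solution at `i = n + 1` is the Kirkman–Cayley number
`C(n + k, n) * C(2 * n + k + 2, n + 1) / (n + k + 2)`.

In the strip of height `2`, every peak of height `1` is a component `ud`, and a component of height
`2` is a nonempty sequence of peaks `ud` raised by one level. For `r = m + 1 ≥ 1` this leads to the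
count `∑ C(m, j) * C(m + j + 2, j + 1)`, where `j + 1` is the number of components of height `2`.
With `n = j` and `k = m - j`, this summand is `r + 1` times the number of little Schröder paths with
`j + 1` up steps and `m - j` level steps.
-/

open Finset.HasAntidiagonal (antidiagonal)

section Words

variable {α : Type*}

theorem forall_prefix_cons {c : α} {l : List α} {P : List α → Prop} :
    (∀ p, p <+: c :: l → P p) ↔ P [] ∧ ∀ p, p <+: l → P (c :: p) := by
  simp only [List.prefix_cons_iff, or_imp, forall_and, forall_eq, forall_exists_index, and_imp]
  aesop

theorem forall_cons_eq_append_cons {c d : α} {l : List α} {P : List α → Prop} :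
    (∀ p q, c :: l = p ++ d :: q → P p) ↔
      (c = d → P []) ∧ ∀ p q, l = p ++ d :: q → P (c :: p) := by
  simp only [List.cons_eq_append_iff]
  aesop

variable [Fintype α]

theorem encard_eq_ite_add_sum_encard_preimage_cons (s : Set (List α)) [Decidable ([] ∈ s)] :
    s.encard = (if [] ∈ s then 1 else 0) + ∑ c, (List.cons c ⁻¹' s).encard := by
  have split : s = (s ∩ {[]}) ∪ ⋃ c, List.cons c '' (List.cons c ⁻¹' s) := by
    ext (_ | ⟨c, l⟩) <;> simp
  have nil_disjoint : Disjoint (s ∩ {[]}) (⋃ c, List.cons c '' (List.cons c ⁻¹' s)) := by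
    rw [Set.disjoint_left]
    rintro l ⟨-, rfl⟩
    simp
  have pairwise_disjoint :
      Pairwise (Function.onFun Disjoint fun c => List.cons c '' (List.cons c ⁻¹' s)) := by
    intro c d hcd
    rw [Function.onFun, Set.disjoint_left]
    rintro _ ⟨l, -, rfl⟩ ⟨l', -, h⟩
    exact hcd (List.cons.inj h).1.symm
  calc s.encard
      = (s ∩ {[]}).encard + (⋃ c, List.cons c '' (List.cons c ⁻¹' s)).encard := by
        rw [← Set.encard_union_eq nil_disjoint, ← split]
    _ = _ := by
        congr 1
        · split_ifs with h
          · rw [Set.inter_eq_right.2 (Set.singleton_subset_iff.2 h), Set.encard_singleton]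
          · rw [Set.inter_singleton_eq_empty.2 h, Set.encard_empty]
        · rw [Set.encard_iUnion_of_finite pairwise_disjoint, finsum_eq_sum_of_fintype]
          exact Finset.sum_congr rfl fun c _ => List.cons_injective.encard_image _

theorem ncard_eq_ite_add_sum_ncard_preimage_cons {s : Set (List α)} [Decidable ([] ∈ s)]
    (hs : s.Finite) :
    s.ncard = (if [] ∈ s then 1 else 0) + ∑ c, (List.cons c ⁻¹' s).ncard := by
  have preimage_finite (c : α) : (List.cons c ⁻¹' s).Finite :=
    hs.preimage List.cons_injective.injOn
  rw [← Nat.cast_inj (R := ℕ∞)]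
  push_cast
  simp only [hs.cast_ncard_eq, (preimage_finite _).cast_ncard_eq]
  exact encard_eq_ite_add_sum_encard_preimage_cons s

end Words

section Schroeder

/-- A little Schröder path started at height `a` instead of `0`: the suffixes of little Schröder
paths, on which a path is decomposed step by step. -/
def IsLittleSchroederFrom (a : ℕ) (l : List (Fin 3)) : Prop :=
  a + l.count 0 = l.count 1 ∧ (∀ p, p <+: l → p.count 1 ≤ a + p.count 0) ∧
    ∀ p q, l = p ++ (2 : Fin 3) :: q → p.count 1 < a + p.count 0

theorem isLittleSchroederFrom_zero {l : List (Fin 3)} :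
    IsLittleSchroederFrom 0 l ↔ IsLittleSchroeder l := by
  simp only [IsLittleSchroederFrom, IsLittleSchroeder, IsLargeSchroeder, zero_add, and_assoc]

@[simp]
theorem isLittleSchroederFrom_nil {a : ℕ} : IsLittleSchroederFrom a [] ↔ a = 0 := by
  simp [IsLittleSchroederFrom]

@[simp]
theorem isLittleSchroederFrom_up_cons {a : ℕ} {l : List (Fin 3)} :
    IsLittleSchroederFrom a (0 :: l) ↔ IsLittleSchroederFrom (a + 1) l := by
  rw [IsLittleSchroederFrom, forall_prefix_cons, forall_cons_eq_append_cons]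
  simp [IsLittleSchroederFrom, add_assoc, add_comm 1]

@[simp]
theorem isLittleSchroederFrom_succ_down_cons {a : ℕ} {l : List (Fin 3)} :
    IsLittleSchroederFrom (a + 1) (1 :: l) ↔ IsLittleSchroederFrom a l := by
  rw [IsLittleSchroederFrom, forall_prefix_cons, forall_cons_eq_append_cons]
  simp [IsLittleSchroederFrom, add_right_comm a 1]

@[simp]
theorem not_isLittleSchroederFrom_zero_down_cons {l : List (Fin 3)} :
    ¬ IsLittleSchroederFrom 0 (1 :: l) := fun h => by
  simpa using h.2.1 [1] (by simp)

@[simp]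
theorem isLittleSchroederFrom_level_cons {a : ℕ} {l : List (Fin 3)} :
    IsLittleSchroederFrom a (2 :: l) ↔ 0 < a ∧ IsLittleSchroederFrom a l := by
  rw [IsLittleSchroederFrom, forall_prefix_cons, forall_cons_eq_append_cons]
  simp only [IsLittleSchroederFrom, List.count_cons_of_ne, List.count_nil, add_zero, zero_le,
    true_and, forall_const, ne_eq, Fin.reduceEq, not_false_eq_true]
  tauto

/-- The little Schröder paths from height `a` with exactly `i` up steps and `k` level steps. -/
def littleSchroederPaths (a i k : ℕ) : Set (List (Fin 3)) :=
  {l | IsLittleSchroederFrom a l ∧ l.count 0 = i ∧ l.count 2 = k}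

theorem finite_littleSchroederPaths (a i k : ℕ) : (littleSchroederPaths a i k).Finite := by
  refine (List.finite_length_eq (Fin 3) (a + 2 * i + k)).subset ?_
  rintro l ⟨⟨count_eq, -⟩, rfl, rfl⟩
  have length_eq : l.count 0 + l.count 1 + l.count 2 = l.length := by
    rw [← Fin.sum_univ_three (fun c => l.count c)]
    simpa using Multiset.sum_count_eq_card (m := (l : Multiset (Fin 3))) fun c _ =>
      Finset.mem_univ c
  rw [Set.mem_ofPred_eq]
  omega

theorem ncard_littleSchroederPaths_zero_zero (k : ℕ) :
    (littleSchroederPaths 0 0 k).ncard = if k = 0 then 1 else 0 := by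
  classical
  rw [ncard_eq_ite_add_sum_ncard_preimage_cons (finite_littleSchroederPaths _ _ _)]
  simp [littleSchroederPaths, Fin.sum_univ_three, eq_comm (a := 0)]

theorem ncard_littleSchroederPaths_zero_succ (i k : ℕ) :
    (littleSchroederPaths 0 (i + 1) k).ncard = (littleSchroederPaths 1 i k).ncard := by
  classical
  rw [ncard_eq_ite_add_sum_ncard_preimage_cons (finite_littleSchroederPaths _ _ _)]
  simp [littleSchroederPaths, Fin.sum_univ_three]

theorem ncard_littleSchroederPaths_succ_zero_zero (a : ℕ) :
    (littleSchroederPaths (a + 1) 0 0).ncard = (littleSchroederPaths a 0 0).ncard := by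
  classical
  rw [ncard_eq_ite_add_sum_ncard_preimage_cons (finite_littleSchroederPaths _ _ _)]
  simp [littleSchroederPaths, Fin.sum_univ_three]

theorem ncard_littleSchroederPaths_succ_zero_succ (a k : ℕ) :
    (littleSchroederPaths (a + 1) 0 (k + 1)).ncard =
      (littleSchroederPaths a 0 (k + 1)).ncard + (littleSchroederPaths (a + 1) 0 k).ncard := by
  classical
  rw [ncard_eq_ite_add_sum_ncard_preimage_cons (finite_littleSchroederPaths _ _ _)]
  simp [littleSchroederPaths, Fin.sum_univ_three]

theorem ncard_littleSchroederPaths_succ_succ_zero (a i : ℕ) :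
    (littleSchroederPaths (a + 1) (i + 1) 0).ncard =
      (littleSchroederPaths (a + 2) i 0).ncard + (littleSchroederPaths a (i + 1) 0).ncard := by
  classical
  rw [ncard_eq_ite_add_sum_ncard_preimage_cons (finite_littleSchroederPaths _ _ _)]
  simp [littleSchroederPaths, Fin.sum_univ_three, add_assoc]

theorem ncard_littleSchroederPaths_succ_succ_succ (a i k : ℕ) :
    (littleSchroederPaths (a + 1) (i + 1) (k + 1)).ncard =
      (littleSchroederPaths (a + 2) i (k + 1)).ncard +
        (littleSchroederPaths a (i + 1) (k + 1)).ncard +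
        (littleSchroederPaths (a + 1) (i + 1) k).ncard := by
  classical
  rw [ncard_eq_ite_add_sum_ncard_preimage_cons (finite_littleSchroederPaths _ _ _)]
  simp [littleSchroederPaths, Fin.sum_univ_three, add_assoc]

theorem ncard_littleSchroederPaths_succ_zero (a k : ℕ) :
    (littleSchroederPaths (a + 1) 0 k).ncard = (a + k).choose k := by
  induction k generalizing a with
  | zero =>
    induction a with
    | zero => simp [ncard_littleSchroederPaths_succ_zero_zero, ncard_littleSchroederPaths_zero_zero]
    | succ a ih => simp [ncard_littleSchroederPaths_succ_zero_zero (a + 1), ih]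
  | succ k ihk =>
    induction a with
    | zero =>
      simp [ncard_littleSchroederPaths_succ_zero_succ, ncard_littleSchroederPaths_zero_zero, ihk]
    | succ a iha =>
      rw [ncard_littleSchroederPaths_succ_zero_succ, iha, ihk, add_right_comm a 1 k,
        ← add_assoc (a + 1) k 1, add_right_comm a 1 k, Nat.choose_succ_succ, add_comm, add_assoc]

/-- The number of little Schröder paths from height `n + 1 - i` to `0` with `i` up steps,
`n + 1` down steps and `k` level steps, extended to all `i` as a rational expression. For
`i = n + 1` it is the Kirkman–Cayley number of dissections of a polygon. -/
noncomputable def schroederBallot (n i k : ℕ) : ℚ :=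
  ((n + 1 - i) * (n + k + 1) + (n + 1)) * (i + (n + k + 1)).choose i * (n + k).choose n /
    ((n + 1) * (n + k + 2))

theorem schroederBallot_zero (n k : ℕ) : schroederBallot n 0 k = (n + k).choose k := by
  rw [schroederBallot, ← Nat.choose_symm_add, Nat.choose_zero_right]
  field_simp
  ring

theorem schroederBallot_self (n k : ℕ) :
    schroederBallot n (n + 1) k = schroederBallot n n k := by
  simp only [schroederBallot, Nat.cast_add_choose]
  rw [show n + 1 + (n + k + 1) = (n + (n + k + 1)) + 1 by ring, Nat.factorial_succ n,
    Nat.factorial_succ (n + (n + k + 1))]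
  push_cast
  field_simp
  ring

theorem schroederBallot_succ_succ_zero (n i : ℕ) :
    schroederBallot (n + 1) (i + 1) 0 =
      schroederBallot (n + 1) i 0 + schroederBallot n (i + 1) 0 := by
  simp only [schroederBallot, Nat.cast_add_choose]
  rw [show i + 1 + (n + 1 + 0 + 1) = (i + n + 2) + 1 by ring,
    show i + (n + 1 + 0 + 1) = i + n + 2 by ring, show i + 1 + (n + 0 + 1) = i + n + 2 by ring]
  simp only [Nat.factorial_succ, add_zero]
  push_cast
  field_simp
  ring

theorem schroederBallot_succ_succ_succ (n i k : ℕ) :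
    schroederBallot (n + 1) (i + 1) (k + 1) =
      schroederBallot (n + 1) i (k + 1) + schroederBallot n (i + 1) (k + 1) +
        schroederBallot (n + 1) (i + 1) k := by
  simp only [schroederBallot, Nat.cast_add_choose]
  rw [show i + 1 + (n + 1 + (k + 1) + 1) = (i + n + k + 3) + 1 by ring,
    show i + (n + 1 + (k + 1) + 1) = i + n + k + 3 by ring,
    show i + 1 + (n + (k + 1) + 1) = i + n + k + 3 by ring,
    show i + 1 + (n + 1 + k + 1) = i + n + k + 3 by ring,
    show n + 1 + (k + 1) = n + k + 1 + 1 by ring, show n + (k + 1) = n + k + 1 by ring,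
    show n + 1 + k = n + k + 1 by ring]
  simp only [Nat.factorial_succ]
  push_cast
  field_simp
  ring

theorem ncard_littleSchroederPaths {a n i : ℕ} (k : ℕ) (h : a + i = n + 1) :
    ((littleSchroederPaths a i k).ncard : ℚ) = schroederBallot n i k := by
  match a, i, k with
  | a, 0, k =>
    obtain rfl : a = n + 1 := h
    rw [ncard_littleSchroederPaths_succ_zero, schroederBallot_zero]
  | 0, i + 1, k =>
    obtain rfl : i = n := by omega
    rw [ncard_littleSchroederPaths_zero_succ, schroederBallot_self,
      ncard_littleSchroederPaths k (add_comm 1 i)]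
  | a + 1, i + 1, 0 =>
    obtain ⟨m, rfl⟩ : ∃ m, n = m + 1 := ⟨a + i, by omega⟩
    rw [ncard_littleSchroederPaths_succ_succ_zero, schroederBallot_succ_succ_zero, Nat.cast_add,
      ncard_littleSchroederPaths (n := m + 1) 0 (by omega),
      ncard_littleSchroederPaths (n := m) 0 (by omega)]
  | a + 1, i + 1, k + 1 =>
    obtain ⟨m, rfl⟩ : ∃ m, n = m + 1 := ⟨a + i, by omega⟩
    rw [ncard_littleSchroederPaths_succ_succ_succ, schroederBallot_succ_succ_succ, Nat.cast_add,
      Nat.cast_add, ncard_littleSchroederPaths (n := m + 1) (k + 1) (by omega),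
      ncard_littleSchroederPaths (n := m) (k + 1) (by omega),
      ncard_littleSchroederPaths (n := m + 1) k (by omega)]
termination_by a + 2 * i + k

theorem mul_ncard_littleSchroederPaths_zero_succ (n k : ℕ) :
    (n + k + 2) * (littleSchroederPaths 0 (n + 1) k).ncard =
      (n + k).choose n * (n + k + 1 + n + 1).choose (n + 1) := by
  rw [← Nat.cast_inj (R := ℚ), Nat.cast_mul, ncard_littleSchroederPaths k (zero_add (n + 1)),
    schroederBallot, add_assoc _ n 1, add_comm _ (n + 1)]
  push_cast
  field_simp
  ring

theorem card_isLittleSchroeder_eq_sum (r : ℕ) :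
    Nat.card {l : List (Fin 3) // IsLittleSchroeder l ∧ schroederSemiLength l = r} =
      ∑ p ∈ antidiagonal r, (littleSchroederPaths 0 p.1 p.2).ncard := by
  have eq_biUnion : {l : List (Fin 3) | IsLittleSchroeder l ∧ schroederSemiLength l = r} =
      ⋃ p ∈ (antidiagonal r : Set (ℕ × ℕ)), littleSchroederPaths 0 p.1 p.2 := by
    ext l
    simp [littleSchroederPaths, isLittleSchroederFrom_zero, schroederSemiLength, and_comm]
  have pairwise_disjoint : (antidiagonal r : Set (ℕ × ℕ)).PairwiseDisjoint
      fun p => littleSchroederPaths 0 p.1 p.2 := by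
    refine fun p _ q _ hpq => Set.disjoint_left.2 ?_
    rintro l ⟨-, hp₁, hp₂⟩ ⟨-, hq₁, hq₂⟩
    exact hpq (Prod.ext (hp₁.symm.trans hq₁) (hp₂.symm.trans hq₂))
  calc Nat.card {l : List (Fin 3) // IsLittleSchroeder l ∧ schroederSemiLength l = r}
      = {l : List (Fin 3) | IsLittleSchroeder l ∧ schroederSemiLength l = r}.ncard :=
        Nat.card_coe_set_eq _
    _ = _ := by
        rw [eq_biUnion, (Finset.finite_toSet _).ncard_biUnion
          (fun p _ => finite_littleSchroederPaths 0 p.1 p.2) pairwise_disjoint,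
          finsum_mem_coe_finset]

theorem card_isLittleSchroeder_succ_eq_sum (m : ℕ) :
    Nat.card {l : List (Fin 3) // IsLittleSchroeder l ∧ schroederSemiLength l = m + 1} =
      ∑ p ∈ antidiagonal m, (littleSchroederPaths 0 (p.1 + 1) p.2).ncard := by
  rw [card_isLittleSchroeder_eq_sum, Finset.Nat.sum_antidiagonal_succ,
    ncard_littleSchroederPaths_zero_zero, if_neg m.succ_ne_zero, zero_add]

end Schroeder

section Dyck

@[simp]
theorem lsum_nil : lsum [] = 0 := rfl

@[simp]
theorem lsum_cons (b : Bool) (l : List Bool) : lsum (b :: l) = stepVal b + lsum l := by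
  simp [lsum]

@[simp]
theorem stepVal_true : stepVal true = 1 := rfl

@[simp]
theorem stepVal_false : stepVal false = -1 := rfl

/-- A `±1` path from height `a` to height `0` that stays between the heights `0` and `H`. -/
def IsStripPath (H a : ℤ) (l : List Bool) : Prop :=
  a + lsum l = 0 ∧ ∀ p, p <+: l → a + lsum p ∈ Set.Icc 0 H

theorem isStripPath_zero {H : ℤ} {l : List Bool} :
    IsStripPath H 0 l ↔ IsDyckList l ∧ ∀ p, p <+: l → lsum p ≤ H := by
  simp only [IsStripPath, IsDyckList, zero_add, Set.mem_Icc, forall_and, and_assoc]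

theorem isStripPath_nil {H a : ℤ} : IsStripPath H a [] ↔ a = 0 ∧ a ∈ Set.Icc 0 H := by
  simp [IsStripPath]

theorem isStripPath_cons {H a : ℤ} {b : Bool} {l : List Bool} :
    IsStripPath H a (b :: l) ↔ a ∈ Set.Icc 0 H ∧ IsStripPath H (a + stepVal b) l := by
  simp only [IsStripPath, forall_prefix_cons, lsum_cons, lsum_nil, add_zero, add_assoc]
  tauto

theorem IsStripPath.mem_Icc {H a : ℤ} {l : List Bool} (h : IsStripPath H a l) :
    a ∈ Set.Icc 0 H := by
  simpa using h.2 [] List.nil_prefix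

theorem isStripPath_true_false_cons {H a : ℤ} {l : List Bool} :
    IsStripPath H a (true :: false :: l) ↔ a + 1 ≤ H ∧ IsStripPath H a l := by
  rw [isStripPath_cons, isStripPath_cons, stepVal_true, stepVal_false, add_neg_cancel_right]
  constructor
  · rintro ⟨-, peak, h⟩
    exact ⟨peak.2, h⟩
  · rintro ⟨peak, h⟩
    exact ⟨h.mem_Icc, ⟨by linarith [h.mem_Icc.1], peak⟩, h⟩

/-- The occurrences of peaks of height `h` in `l`, an occurrence being recorded as the pair of
words before and after the peak. -/
def peakSplits (l : List Bool) (h : ℤ) : Set (List Bool × List Bool) :=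
  {pq | l = pq.1 ++ true :: false :: pq.2 ∧ lsum pq.1 + 1 = h}

theorem listPeakCount_eq_ncard_peakSplits (l : List Bool) (h : ℤ) :
    listPeakCount l h = (peakSplits l h).ncard :=
  Nat.card_coe_set_eq _

theorem peakSplits_cons (b : Bool) (l : List Bool) (h : ℤ) :
    peakSplits (b :: l) h = Prod.map (List.cons b) id '' peakSplits l (h - stepVal b) ∪
      {pq | pq.1 = [] ∧ b :: l = true :: false :: pq.2 ∧ h = 1} := by
  ext ⟨_ | ⟨c, p⟩, q⟩
  · simp [peakSplits, eq_comm]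
  · simp only [peakSplits, Set.mem_ofPred_eq, List.cons_append, List.cons.injEq, lsum_cons,
      eq_sub_iff_add_eq, Set.mem_union, Set.mem_image, Prod.exists, Prod.map_apply, id_eq,
      Prod.mk.injEq, exists_eq_right_right, reduceCtorEq, false_and, or_false]
    grind

theorem finite_peakSplits (l : List Bool) (h : ℤ) : (peakSplits l h).Finite := by
  refine Set.Finite.of_finite_image (f := Prod.fst) (l.inits.toFinset.finite_toSet.subset ?_) ?_
  · rintro _ ⟨pq, ⟨rfl, -⟩, rfl⟩
    simp
  · rintro ⟨p, q⟩ ⟨hl, -⟩ ⟨p', q'⟩ ⟨hl', -⟩ (rfl : p = p')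
    simpa using hl.symm.trans hl'

theorem ncard_map_cons_image (b : Bool) (s : Set (List Bool × List Bool)) :
    (Prod.map (List.cons b) id '' s).ncard = s.ncard :=
  Set.ncard_image_of_injective _ (List.cons_injective.prodMap Function.injective_id)

@[simp]
theorem listPeakCount_nil (h : ℤ) : listPeakCount [] h = 0 := by
  simp [listPeakCount_eq_ncard_peakSplits, peakSplits]

@[simp]
theorem listPeakCount_false_cons (l : List Bool) (h : ℤ) :
    listPeakCount (false :: l) h = listPeakCount l (h + 1) := by
  simp [listPeakCount_eq_ncard_peakSplits, peakSplits_cons, ncard_map_cons_image]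

@[simp]
theorem listPeakCount_true_true_cons (l : List Bool) (h : ℤ) :
    listPeakCount (true :: true :: l) h = listPeakCount (true :: l) (h - 1) := by
  rw [listPeakCount_eq_ncard_peakSplits, peakSplits_cons]
  simp [listPeakCount_eq_ncard_peakSplits, ncard_map_cons_image]

@[simp]
theorem listPeakCount_true_false_cons (l : List Bool) (h : ℤ) :
    listPeakCount (true :: false :: l) h = listPeakCount l h + if h = 1 then 1 else 0 := by
  have initial_peak : {pq : List Bool × List Bool |
      pq.1 = [] ∧ true :: false :: l = true :: false :: pq.2 ∧ h = 1} =
      if h = 1 then {([], l)} else ∅ := by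
    split_ifs with hh <;> ext ⟨p, q⟩ <;> simp [hh, eq_comm]
  have later_peaks : (Prod.map (List.cons true) id '' peakSplits (false :: l) (h - 1)).ncard =
      listPeakCount l h := by
    rw [ncard_map_cons_image, ← listPeakCount_eq_ncard_peakSplits, listPeakCount_false_cons,
      sub_add_cancel]
  rw [listPeakCount_eq_ncard_peakSplits, peakSplits_cons, stepVal_true, initial_peak,
    Set.ncard_union_eq ?_ ((finite_peakSplits _ _).image _) (by split_ifs <;> simp), later_peaks]
  · split_ifs <;> simp
  · split_ifs <;> simp [Set.disjoint_singleton_right]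

/-- The paths from height `a` in the strip of height `2` with exactly `x` peaks of height `1` and
`y` peaks of height `2`; `listPeakCount` measures heights from the start of the word, whence the
shifts by `a`. -/
def stripPaths (a : ℤ) (x y : ℕ) : Set (List Bool) :=
  {l | IsStripPath 2 a l ∧ listPeakCount l (1 - a) = x ∧ listPeakCount l (2 - a) = y}

theorem mem_stripPaths {a : ℤ} {x y : ℕ} {l : List Bool} :
    l ∈ stripPaths a x y ↔
      IsStripPath 2 a l ∧ listPeakCount l (1 - a) = x ∧ listPeakCount l (2 - a) = y :=
  Iff.rfl

theorem stripPaths_eq_empty {a : ℤ} (ha : a ∉ Set.Icc 0 2) (x y : ℕ) : stripPaths a x y = ∅ :=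
  Set.eq_empty_of_forall_notMem fun _ h => ha h.1.mem_Icc

theorem nil_mem_stripPaths {a : ℤ} {x y : ℕ} :
    [] ∈ stripPaths a x y ↔ a = 0 ∧ x = 0 ∧ y = 0 := by
  simp only [mem_stripPaths, isStripPath_nil, Set.mem_Icc, listPeakCount_nil]
  grind

theorem false_cons_mem_stripPaths {a : ℤ} (ha : a ∈ Set.Icc 0 2) {x y : ℕ} {l : List Bool} :
    false :: l ∈ stripPaths a x y ↔ l ∈ stripPaths (a - 1) x y := by
  rw [mem_stripPaths, mem_stripPaths, isStripPath_cons, listPeakCount_false_cons,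
    listPeakCount_false_cons, stepVal_false, ← sub_eq_add_neg, sub_sub_eq_add_sub,
    sub_sub_eq_add_sub, add_sub_right_comm, add_sub_right_comm, and_iff_right ha]

theorem true_true_cons_mem_stripPaths {a : ℤ} (ha : a ∈ Set.Icc 0 2) {x y : ℕ} {l : List Bool} :
    true :: true :: l ∈ stripPaths a x y ↔ true :: l ∈ stripPaths (a + 1) x y := by
  rw [mem_stripPaths, mem_stripPaths, isStripPath_cons, listPeakCount_true_true_cons,
    listPeakCount_true_true_cons, stepVal_true, sub_sub, sub_sub, and_iff_right ha]

theorem true_false_cons_mem_stripPaths_zero {x y : ℕ} {l : List Bool} :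
    true :: false :: l ∈ stripPaths 0 x y ↔ ∃ x', x = x' + 1 ∧ l ∈ stripPaths 0 x' y := by
  simp only [mem_stripPaths, isStripPath_true_false_cons, listPeakCount_true_false_cons]
  grind

theorem true_false_cons_mem_stripPaths_one {x y : ℕ} {l : List Bool} :
    true :: false :: l ∈ stripPaths 1 x y ↔ ∃ y', y = y' + 1 ∧ l ∈ stripPaths 1 x y' := by
  simp only [mem_stripPaths, isStripPath_true_false_cons, listPeakCount_true_false_cons]
  grind

theorem encard_stripPaths {a : ℤ} (ha : a ∈ Set.Icc 0 2) (x y : ℕ) :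
    (stripPaths a x y).encard = (if a = 0 ∧ x = 0 ∧ y = 0 then 1 else 0) +
      (stripPaths (a - 1) x y).encard + (List.cons true ⁻¹' stripPaths a x y).encard := by
  classical
  have false_preimage : List.cons false ⁻¹' stripPaths a x y = stripPaths (a - 1) x y :=
    Set.ext fun _ => false_cons_mem_stripPaths ha
  rw [encard_eq_ite_add_sum_encard_preimage_cons, Fintype.sum_bool, false_preimage, add_assoc,
    add_comm (stripPaths (a - 1) x y).encard]
  simp only [nil_mem_stripPaths]

theorem encard_true_preimage_stripPaths {a : ℤ} (ha : a ∈ Set.Icc 0 2) (x y : ℕ) :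
    (List.cons true ⁻¹' stripPaths a x y).encard =
      {l | true :: false :: l ∈ stripPaths a x y}.encard +
        (List.cons true ⁻¹' stripPaths (a + 1) x y).encard := by
  classical
  have nil_notMem : [] ∉ List.cons true ⁻¹' stripPaths a x y := by
    rintro ⟨⟨sum_eq, -⟩, -⟩
    have := ha.1
    simp only [lsum_cons, stepVal_true, lsum_nil, add_zero] at sum_eq
    omega
  have true_preimage : List.cons true ⁻¹' (List.cons true ⁻¹' stripPaths a x y) =
      List.cons true ⁻¹' stripPaths (a + 1) x y :=
    Set.ext fun _ => true_true_cons_mem_stripPaths ha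
  rw [encard_eq_ite_add_sum_encard_preimage_cons, if_neg nil_notMem, zero_add, Fintype.sum_bool,
    true_preimage, add_comm]
  rfl

theorem true_preimage_stripPaths_two (x y : ℕ) : List.cons true ⁻¹' stripPaths 2 x y = ∅ := by
  refine Set.eq_empty_of_forall_notMem fun l h => ?_
  simpa using (isStripPath_cons.1 h.1).2.mem_Icc

theorem encard_true_preimage_stripPaths_one_zero (x : ℕ) :
    (List.cons true ⁻¹' stripPaths 1 x 0).encard = 0 := by
  simp [encard_true_preimage_stripPaths, true_false_cons_mem_stripPaths_one, one_add_one_eq_two,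
    true_preimage_stripPaths_two]

theorem encard_true_preimage_stripPaths_one_succ (x y : ℕ) :
    (List.cons true ⁻¹' stripPaths 1 x (y + 1)).encard = (stripPaths 1 x y).encard := by
  simp [encard_true_preimage_stripPaths, true_false_cons_mem_stripPaths_one, one_add_one_eq_two,
    true_preimage_stripPaths_two]

theorem encard_stripPaths_one_zero (x : ℕ) :
    (stripPaths 1 x 0).encard = (stripPaths 0 x 0).encard := by
  simp [encard_stripPaths (a := 1), encard_true_preimage_stripPaths_one_zero]

theorem encard_stripPaths_one_succ (x y : ℕ) :
    (stripPaths 1 x (y + 1)).encard =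
      (stripPaths 0 x (y + 1)).encard + (stripPaths 1 x y).encard := by
  simp [encard_stripPaths (a := 1), encard_true_preimage_stripPaths_one_succ]

theorem encard_stripPaths_zero_zero_succ (y : ℕ) :
    (stripPaths 0 0 (y + 1)).encard = (stripPaths 1 0 y).encard := by
  simp [encard_stripPaths (a := 0), encard_true_preimage_stripPaths (a := 0),
    true_false_cons_mem_stripPaths_zero, encard_true_preimage_stripPaths_one_succ,
    stripPaths_eq_empty (a := -1)]

theorem encard_stripPaths_zero_succ_succ (x y : ℕ) :
    (stripPaths 0 (x + 1) (y + 1)).encard =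
      (stripPaths 0 x (y + 1)).encard + (stripPaths 1 (x + 1) y).encard := by
  simp [encard_stripPaths (a := 0) _ (x + 1), encard_true_preimage_stripPaths (a := 0),
    true_false_cons_mem_stripPaths_zero, encard_true_preimage_stripPaths_one_succ,
    stripPaths_eq_empty (a := -1)]

theorem encard_stripPaths_zero_zero (x : ℕ) : (stripPaths 0 x 0).encard = 1 := by
  induction x with
  | zero =>
    simp [encard_stripPaths (a := 0), encard_true_preimage_stripPaths (a := 0),
      true_false_cons_mem_stripPaths_zero, encard_true_preimage_stripPaths_one_zero,
      stripPaths_eq_empty (a := -1)]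
  | succ x ih =>
    simp [encard_stripPaths (a := 0) _ (x + 1), encard_true_preimage_stripPaths (a := 0),
      true_false_cons_mem_stripPaths_zero, encard_true_preimage_stripPaths_one_zero,
      stripPaths_eq_empty (a := -1), ih]

/-- The number of paths from height `1` to height `0` in the strip of height `2` with `x` peaks of
height `1` and `y` peaks of height `2`. -/
def raisedStripCount (x y : ℕ) : ℕ := ∑ p ∈ antidiagonal y, y.choose p.1 * (x + p.1).choose p.1

/-- The number of Dyck paths of height at most `2` with `x` peaks of height `1` and `y + 1` peaks of
height `2`. The summand at `(j, k)` counts the paths with `j + 1` components of height `2`. -/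
def stripCount (x y : ℕ) : ℕ := ∑ p ∈ antidiagonal y, y.choose p.1 * (x + p.1 + 1).choose (p.1 + 1)

theorem raisedStripCount_zero (x : ℕ) : raisedStripCount x 0 = 1 := by
  simp [raisedStripCount]

theorem stripCount_zero (y : ℕ) : stripCount 0 y = raisedStripCount 0 y := by
  simp [stripCount, raisedStripCount]

theorem stripCount_succ (x y : ℕ) :
    stripCount (x + 1) y = stripCount x y + raisedStripCount (x + 1) y := by
  rw [stripCount, stripCount, raisedStripCount, ← Finset.sum_add_distrib]
  refine Finset.sum_congr rfl fun p _ => ?_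
  rw [← mul_add, add_right_comm x 1, Nat.choose_succ_succ, add_comm (Nat.choose _ _)]

theorem raisedStripCount_succ (x y : ℕ) :
    raisedStripCount x (y + 1) = stripCount x y + raisedStripCount x y := by
  have pascal := Finset.sum_antidiagonal_choose_succ_mul (R := ℕ) (fun j _ => (x + j).choose j) y
  simp only [Nat.cast_id] at pascal
  rw [raisedStripCount, pascal, add_comm]
  congr 1
  refine Finset.sum_congr rfl fun p hp => ?_
  rw [Nat.choose_symm_of_eq_add (Finset.HasAntidiagonal.mem_antidiagonal.1 hp).symm, add_assoc]

theorem encard_stripPaths_zero_succ_of_encard_stripPaths_one {y : ℕ}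
    (h : ∀ x, (stripPaths 1 x y).encard = raisedStripCount x y) (x : ℕ) :
    (stripPaths 0 x (y + 1)).encard = stripCount x y := by
  induction x with
  | zero => rw [encard_stripPaths_zero_zero_succ, h, stripCount_zero]
  | succ x ih => rw [encard_stripPaths_zero_succ_succ, ih, h, stripCount_succ, Nat.cast_add]

theorem encard_stripPaths_one (x y : ℕ) : (stripPaths 1 x y).encard = raisedStripCount x y := by
  induction y generalizing x with
  | zero =>
    rw [encard_stripPaths_one_zero, encard_stripPaths_zero_zero, raisedStripCount_zero,
      Nat.cast_one]
  | succ y ih =>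
    rw [encard_stripPaths_one_succ, encard_stripPaths_zero_succ_of_encard_stripPaths_one ih, ih,
      raisedStripCount_succ, Nat.cast_add]

theorem encard_stripPaths_zero_succ (x y : ℕ) :
    (stripPaths 0 x (y + 1)).encard = stripCount x y :=
  encard_stripPaths_zero_succ_of_encard_stripPaths_one (encard_stripPaths_one · y) x

theorem card_isDyckList_le_two_eq_ncard_stripPaths (x y : ℕ) :
    Nat.card {l : List Bool // IsDyckList l ∧ (∀ p, p <+: l → lsum p ≤ 2) ∧
      listPeakCount l 1 = x ∧ listPeakCount l 2 = y} = (stripPaths 0 x y).ncard := by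
  rw [← Nat.card_coe_set_eq]
  refine Nat.card_congr (Equiv.subtypeEquivRight fun l => ?_)
  simp only [mem_stripPaths, isStripPath_zero, sub_zero, and_assoc]

end Dyck

/-- For every integer `r ≥ 0`, the number of Dyck paths of
height at most `2` having exactly `r` peaks of height `1` and exactly `r`
peaks of height `2` equals `(r+1) * s_r`, where `s_r` is the number of little
Schröder paths of semi-length `r`. -/
theorem stmt_13 (r : ℕ) :
    Nat.card {l : List Bool // IsDyckList l ∧ (∀ p, p <+: l → lsum p ≤ 2) ∧
        listPeakCount l 1 = r ∧ listPeakCount l 2 = r} =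
      (r + 1) * Nat.card {l : List (Fin 3) //
        IsLittleSchroeder l ∧ schroederSemiLength l = r} := by
  rw [card_isDyckList_le_two_eq_ncard_stripPaths]
  cases r with
  | zero =>
    rw [Set.ncard, encard_stripPaths_zero_zero, card_isLittleSchroeder_eq_sum]
    simp [ncard_littleSchroederPaths_zero_zero]
  | succ m =>
    rw [Set.ncard, encard_stripPaths_zero_succ, ENat.toNat_natCast, stripCount,
      card_isLittleSchroeder_succ_eq_sum, Finset.mul_sum]
    refine Finset.sum_congr rfl fun ⟨j, k⟩ hjk => ?_
    obtain rfl : j + k = m := Finset.HasAntidiagonal.mem_antidiagonal.1 hjk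
    exact (mul_ncard_littleSchroederPaths_zero_succ j k).symm
end
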